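/- arXiv:2201.00847 — 2 statements merged into one kernel-verified Lean document; each statement's English description precedes it below -/
import Mathlib

section
/- Let M be a stable R-module with G_C-dim_R(M) = 0 and λM ∈ A_C. Then M is horizontally linked, λM is a stable R-module, and G_C-dim_R(λM ⊗_R C) = 0. -/
open CategoryTheory TensorProduct

noncomputable section

universe u

variable (R : Type u) [CommRing R]

/-- The `i`-th Ext module `Ext_R^i(M, N)`. -/
def ExtM (M N : ModuleCat.{u} R) (i : ℕ) : ModuleCat.{u} R :=
  ((Ext R (ModuleCat.{u} R) i).obj (Opposite.op M)).obj N

/-- The `i`-th Tor module `Tor_i^R(M, N)`. -/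
def TorM (M N : ModuleCat.{u} R) (i : ℕ) : ModuleCat.{u} R :=
  ((Tor (ModuleCat.{u} R) i).obj M).obj N

/-- The biduality (evaluation) map `M → Hom_R(Hom_R(M, C), C)`. -/
def bidualityMap (C M : ModuleCat.{u} R) :
    ↥M →ₗ[R] ((↥M →ₗ[R] ↥C) →ₗ[R] ↥C) :=
  (LinearMap.id : (↥M →ₗ[R] ↥C) →ₗ[R] (↥M →ₗ[R] ↥C)).flip

/-- `C` is a semidualizing `R`-module. -/
def IsSemidualizing (C : ModuleCat.{u} R) : Prop :=
  Module.Finite R ↥C ∧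
  Function.Bijective (fun r : R => (r • LinearMap.id : ↥C →ₗ[R] ↥C)) ∧
  ∀ i : ℕ, 0 < i → Subsingleton (ExtM R C C i)

/-- `M` is totally `C`-reflexive. -/
def IsTotallyCReflexive (C M : ModuleCat.{u} R) : Prop :=
  Module.Finite R ↥M ∧
  Function.Bijective (bidualityMap R C M) ∧
  (∀ i : ℕ, 0 < i → Subsingleton (ExtM R M C i)) ∧
  (∀ i : ℕ, 0 < i → Subsingleton (ExtM R (ModuleCat.of R (↥M →ₗ[R] ↥C)) C i))

/-- `G_C`-dimension of `M` is at most `n`: there is an exact sequence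
`0 → X_n → ⋯ → X_0 → M → 0` with each `X_i` totally `C`-reflexive. -/
def gcdimLE (C : ModuleCat.{u} R) : ℕ → ModuleCat.{u} R → Prop
  | 0, M => IsTotallyCReflexive R C M
  | n+1, M => ∃ (X K : ModuleCat.{u} R) (f : ↥K →ₗ[R] ↥X) (g : ↥X →ₗ[R] ↥M),
      Function.Injective f ∧ Function.Surjective g ∧
      LinearMap.ker g = LinearMap.range f ∧
      IsTotallyCReflexive R C X ∧ gcdimLE C n K

/-- The `G_C`-dimension of `M`, as an element of `ℕ∞`. -/
def gcdim (C M : ModuleCat.{u} R) : ℕ∞ :=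
  sInf ((fun n : ℕ => (n : ℕ∞)) '' {n | gcdimLE R C n M})

/-- `grade_R(M) = inf { i | Ext_R^i(M, R) ≠ 0 }`, with `grade 0 = ∞`. -/
def gradeR (M : ModuleCat.{u} R) : ℕ∞ :=
  sInf ((fun i : ℕ => (i : ℕ∞)) ''
    {i | ¬ Subsingleton (ExtM R M (ModuleCat.of R R) i)})

/-- Reduced grade of `M` with respect to `C`. -/
def rgrade (C M : ModuleCat.{u} R) : ℕ∞ :=
  sInf ((fun i : ℕ => (i : ℕ∞)) ''
    {i | 0 < i ∧ ¬ Subsingleton (ExtM R M C i)})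

/-- `M` is reduced `G_C`-perfect. -/
def IsReducedGCPerfect (C M : ModuleCat.{u} R) : Prop :=
  gcdim R C M ≠ ⊤ ∧ rgrade R C M = gcdim R C M

/-- `M` is `G_C`-perfect. -/
def IsGCPerfect (C M : ModuleCat.{u} R) : Prop :=
  gcdim R C M ≠ ⊤ ∧ gradeR R M = gcdim R C M

/-- `π : P → M` is a projective cover: `P` projective, `π` surjective with superfluous kernel. -/
def IsProjectiveCover {P M : ModuleCat.{u} R} (π : ↥P →ₗ[R] ↥M) : Prop :=
  Module.Projective R ↥P ∧ Function.Surjective π ∧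
  ∀ N : Submodule R ↥P, N ⊔ LinearMap.ker π = ⊤ → N = ⊤

/-- `P₁ →d P₀ →π M → 0` is a minimal projective presentation of `M`. -/
def IsMinimalPresentation {P1 P0 M : ModuleCat.{u} R}
    (d : ↥P1 →ₗ[R] ↥P0) (π : ↥P0 →ₗ[R] ↥M) : Prop :=
  Module.Finite R ↥P1 ∧ Module.Finite R ↥P0 ∧
  IsProjectiveCover R π ∧
  LinearMap.range d = LinearMap.ker π ∧
  Module.Projective R ↥P1 ∧
  ∀ N : Submodule R ↥P1, N ⊔ LinearMap.ker d = ⊤ → N = ⊤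

/-- `T` is (a module isomorphic to) the transpose `Tr_C(M)` of `M` with respect to `C`,
computed from a minimal projective presentation of `M`. -/
def IsTransposeC (C M T : ModuleCat.{u} R) : Prop :=
  ∃ (P1 P0 : ModuleCat.{u} R) (d : ↥P1 →ₗ[R] ↥P0) (π : ↥P0 →ₗ[R] ↥M),
    IsMinimalPresentation R d π ∧
    Nonempty (↥T ≃ₗ[R]
      ((↥P1 →ₗ[R] ↥C) ⧸ LinearMap.range (LinearMap.lcomp R ↥C d)))

/-- `T` is the usual Auslander transpose `Tr(M) = Tr_R(M)`. -/
def IsTranspose (M T : ModuleCat.{u} R) : Prop :=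
  IsTransposeC R (ModuleCat.of R R) M T

/-- `S` is (a module isomorphic to) the first syzygy `Ω N`, i.e. the kernel of a
projective cover of `N`. -/
def IsSyzygyOf (N S : ModuleCat.{u} R) : Prop :=
  ∃ (P : ModuleCat.{u} R) (π : ↥P →ₗ[R] ↥N),
    Module.Finite R ↥P ∧ IsProjectiveCover R π ∧
    Nonempty (↥S ≃ₗ[R] LinearMap.ker π)

/-- `S` is (a module isomorphic to) the `n`-th syzygy `Ωⁿ M`. -/
def IsNthSyzygy : ℕ → ModuleCat.{u} R → ModuleCat.{u} R → Prop
  | 0, M, S => Nonempty (↥S ≃ₗ[R] ↥M)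
  | n+1, M, S => ∃ K : ModuleCat.{u} R, IsNthSyzygy n M K ∧ IsSyzygyOf R K S

/-- `L` is (a module isomorphic to) `λ M = Ω Tr M`. -/
def IsLambda (M L : ModuleCat.{u} R) : Prop :=
  ∃ T : ModuleCat.{u} R, IsTranspose R M T ∧ IsSyzygyOf R T L

/-- `M` is horizontally linked, i.e. `M ≅ λλM`. -/
def IsHorizontallyLinked (M : ModuleCat.{u} R) : Prop :=
  ∃ L L2 : ModuleCat.{u} R, IsLambda R M L ∧ IsLambda R L L2 ∧
    Nonempty (↥M ≃ₗ[R] ↥L2)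

/-- `M` is stable: it has no non-zero projective direct summand. -/
def IsStable (M : ModuleCat.{u} R) : Prop :=
  ∀ (P N : ModuleCat.{u} R), Module.Projective R ↥P →
    Nonempty (↥M ≃ₗ[R] (↥P × ↥N)) → Subsingleton ↥P

/-- `N` belongs to the Auslander class `A_C`. -/
def MemAuslanderClass (C N : ModuleCat.{u} R) : Prop :=
  Function.Bijective (TensorProduct.mk R ↥N ↥C) ∧
  (∀ i : ℕ, 0 < i → Subsingleton (TorM R C N i)) ∧
  (∀ i : ℕ, 0 < i → Subsingleton
    (ExtM R C (ModuleCat.of R (↥N ⊗[R] ↥C)) i))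

/-- `R` is semiperfect: every finite `R`-module has a projective cover. -/
def IsSemiperfectRing : Prop :=
  ∀ M : ModuleCat.{u} R, Module.Finite R ↥M →
    ∃ (P : ModuleCat.{u} R) (π : ↥P →ₗ[R] ↥M),
      Module.Finite R ↥P ∧ IsProjectiveCover R π

/-- Depth over a local ring, via Ext from the residue field. -/
def rdepth [IsLocalRing R] (M : ModuleCat.{u} R) : ℕ∞ :=
  sInf ((fun i : ℕ => (i : ℕ∞)) ''
    {i | ¬ Subsingleton
      (ExtM R (ModuleCat.of R (IsLocalRing.ResidueField R)) M i)})

/-- Projective dimension at most `n`. -/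
def pdimLE : ℕ → ModuleCat.{u} R → Prop
  | 0, M => Module.Projective R ↥M
  | n+1, M => ∃ (X K : ModuleCat.{u} R) (f : ↥K →ₗ[R] ↥X) (g : ↥X →ₗ[R] ↥M),
      Function.Injective f ∧ Function.Surjective g ∧
      LinearMap.ker g = LinearMap.range f ∧
      Module.Projective R ↥X ∧ pdimLE n K

/-- Projective dimension, as an element of `ℕ∞`. -/
def pdim (M : ModuleCat.{u} R) : ℕ∞ :=
  sInf ((fun n : ℕ => (n : ℕ∞)) '' {n | pdimLE R n M})

/-- `M` is `C`-`k`-torsionless. -/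
def IsCkTorsionless (C M : ModuleCat.{u} R) (k : ℕ) : Prop :=
  k = 0 ∨ ∀ T : ModuleCat.{u} R, IsTransposeC R C M T →
    ∀ i : ℕ, 1 ≤ i → i ≤ k → Subsingleton (ExtM R T C i)

/-- `M` is a `C`-syzygy: it embeds into `P ⊗_R C` with `P` finite projective. -/
def IsCSyzygy (C M : ModuleCat.{u} R) : Prop :=
  ∃ (P : ModuleCat.{u} R), Module.Finite R ↥P ∧ Module.Projective R ↥P ∧
    ∃ f : ↥M →ₗ[R] (↥P ⊗[R] ↥C), Function.Injective f


/-- There is an exact sequence `0 → N → X_k → ⋯ → X_1 → M → 0` of finite `R`-modules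
with `Ext_R^i(X_j, C) = 0` for all `i > 0` and all `j`. -/
def ExtVanishingChain (C : ModuleCat.{u} R) : ℕ → ModuleCat.{u} R → ModuleCat.{u} R → Prop
  | 0, N, M => Nonempty (↥N ≃ₗ[R] ↥M)
  | k+1, N, M => ∃ (X K : ModuleCat.{u} R) (f : ↥K →ₗ[R] ↥X) (g : ↥X →ₗ[R] ↥M),
      Function.Injective f ∧ Function.Surjective g ∧
      LinearMap.ker g = LinearMap.range f ∧
      Module.Finite R ↥X ∧ (∀ i : ℕ, 0 < i → Subsingleton (ExtM R X C i)) ∧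
      ExtVanishingChain C k N K


/-!
Write `L = λM` and `X^C = Hom(X, C)`, and let `P₁ → P₀ → M → 0` be a minimal presentation, so that
`L` is the image of `P₀* → P₁*`.

A map from `C` to the kernel of `L ⊗ C → P₁* ⊗ C` comes from an element of `L`, which dies in `P₁*`
because `C` is faithful. Hence that kernel vanishes, and since `Pᵢ* ⊗ C ≅ Pᵢ^C`, the sequence
`0 → M^C → P₀^C → L ⊗ C → 0` is exact. It exhibits `L ⊗ C` as a cokernel of totally `C`-reflexive
modules, whose `C`-dual sequence is exact on the right because `P₀ → M → M^{CC}` is surjective.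

Comparing with `M* ⊗ C → P₀* ⊗ C → L ⊗ C → 0` shows that `M* ⊗ C → M^C` is surjective, so `M`
embeds into `M**`. Projective summands of `L` and of `M` are then controlled by duality: a
projective quotient of `L` dualizes to a summand of `P₀` inside `ker (P₀ → M)`, which is zero, and a
summand of `P₀*` inside `ker (P₀* → L) = M*` dualizes to a projective quotient of `M`. So `L` is
stable and, when `M` is, `P₀* → L` is a projective cover. Hence `λL` is the image of `P₀` in the
dual of a cover of `M*`, which is `M`.
-/

section Superfluous

variable {R}
variable {P P' Q M : Type*} [AddCommGroup P] [Module R P] [AddCommGroup P'] [Module R P']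
  [AddCommGroup Q] [Module R Q] [AddCommGroup M] [Module R M]

/-- A superfluous (small) submodule; `IsProjectiveCover` asks this of the kernel of the cover. -/
def IsSuperfluous (K : Submodule R P) : Prop :=
  ∀ N : Submodule R P, N ⊔ K = ⊤ → N = ⊤

theorem IsSuperfluous.le_jacobson {K : Submodule R P} (hK : IsSuperfluous K) :
    K ≤ Module.jacobson R P := by
  refine le_sInf fun N hN => ?_
  by_contra hKN
  exact hN.1 (hK N (hN.2 _ (left_lt_sup.mpr hKN)))

theorem isSuperfluous_iff_le_jacobson [Module.Finite R P] {K : Submodule R P} :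
    IsSuperfluous K ↔ K ≤ Module.jacobson R P := by
  refine ⟨IsSuperfluous.le_jacobson, fun hK N hN => ?_⟩
  obtain hNtop | ⟨N', hN', hle⟩ := eq_top_or_exists_le_coatom N
  · exact hNtop
  · exact absurd (top_le_iff.mp (hN.ge.trans (sup_le hle (hK.trans (sInf_le hN'))))) hN'.1

theorem IsSuperfluous.surjective_of_comp {π : P →ₗ[R] M} (hπ : IsSuperfluous (LinearMap.ker π))
    {s : P' →ₗ[R] P} (hs : Function.Surjective (π ∘ₗ s)) : Function.Surjective s := by
  refine LinearMap.range_eq_top.mp (hπ _ ?_)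
  have hπsurj : Function.Surjective π := Function.Surjective.of_comp hs
  rw [← LinearMap.map_eq_top_iff (LinearMap.range_eq_top.mpr hπsurj), ← LinearMap.range_comp,
    LinearMap.range_eq_top.mpr hs]

theorem exists_split_lift_of_isSuperfluous_ker [Module.Projective R P] [Module.Projective R P']
    {π : P →ₗ[R] M} (hπ : Function.Surjective π) (hπs : IsSuperfluous (LinearMap.ker π))
    {π' : P' →ₗ[R] M} (hπ' : Function.Surjective π') :
    ∃ (s : P' →ₗ[R] P) (t : P →ₗ[R] P'), π ∘ₗ s = π' ∧ s ∘ₗ t = LinearMap.id := by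
  obtain ⟨s, hs⟩ := Module.projective_lifting_property π π' hπ
  obtain ⟨t, ht⟩ := Module.projective_lifting_property s LinearMap.id
    (hπs.surjective_of_comp (hs ▸ hπ'))
  exact ⟨s, t, hs, ht⟩

theorem exists_linearEquiv_comp_eq_of_isSuperfluous_ker [Module.Projective R P]
    [Module.Projective R P'] {π : P →ₗ[R] M} (hπ : Function.Surjective π)
    (hπs : IsSuperfluous (LinearMap.ker π)) {π' : P' →ₗ[R] M} (hπ' : Function.Surjective π')
    (hπs' : IsSuperfluous (LinearMap.ker π')) :
    ∃ e : P' ≃ₗ[R] P, π ∘ₗ e.toLinearMap = π' := by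
  obtain ⟨s, t, hs, hst⟩ := exists_split_lift_of_isSuperfluous_ker hπ hπs hπ'
  have ht : Function.Surjective t := by
    refine hπs'.surjective_of_comp ?_
    rwa [← hs, LinearMap.comp_assoc, hst, LinearMap.comp_id]
  have hts : t ∘ₗ s = LinearMap.id :=
    LinearMap.ext fun x => by
      obtain ⟨y, rfl⟩ := ht x
      exact congrArg t (LinearMap.congr_fun hst y)
  exact ⟨LinearEquiv.ofLinearMap s t hst hts, hs⟩

theorem nonempty_ker_linearEquiv_ker_of_isSuperfluous [Module.Projective R P]
    [Module.Projective R P'] {π : P →ₗ[R] M} (hπ : Function.Surjective π)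
    (hπs : IsSuperfluous (LinearMap.ker π)) {π' : P' →ₗ[R] M} (hπ' : Function.Surjective π')
    (hπs' : IsSuperfluous (LinearMap.ker π')) :
    Nonempty (LinearMap.ker π ≃ₗ[R] LinearMap.ker π') := by
  obtain ⟨e, he⟩ := exists_linearEquiv_comp_eq_of_isSuperfluous_ker hπ' hπs' hπ hπs
  exact ⟨e.ofSubmodules _ _ (by
    rw [← he, LinearMap.ker_comp]; exact Submodule.map_comap_eq_of_surjective e.surjective _)⟩

theorem IsSuperfluous.subsingleton_of_split {π : P →ₗ[R] M}
    (hπ : IsSuperfluous (LinearMap.ker π)) {i : Q →ₗ[R] P} {r : P →ₗ[R] Q}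
    (hri : r ∘ₗ i = LinearMap.id) (hπi : π ∘ₗ i = 0) : Subsingleton Q := by
  have hr : ∀ q, r (i q) = q := LinearMap.congr_fun hri
  have hker : LinearMap.ker r = ⊤ := by
    refine hπ _ (Submodule.eq_top_iff'.mpr fun x => Submodule.mem_sup.mpr
      ⟨x - i (r x), ?_, i (r x), LinearMap.congr_fun hπi _, sub_add_cancel _ _⟩)
    rw [LinearMap.mem_ker, map_sub, hr, sub_self]
  refine subsingleton_of_forall_eq 0 fun q => ?_
  rw [← hr q, LinearMap.ker_eq_top.mp hker, LinearMap.zero_apply]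

theorem isSuperfluous_ker_of_forall_split_subsingleton [Module.Projective R P]
    [Module.Projective R P'] {π : P →ₗ[R] M}
    (hπ : Function.Surjective π) {c : P' →ₗ[R] M} (hc : Function.Surjective c)
    (hcs : IsSuperfluous (LinearMap.ker c))
    (h : ∀ (Q : Submodule R P) (r : P →ₗ[R] Q), r ∘ₗ Q.subtype = LinearMap.id →
      π ∘ₗ Q.subtype = 0 → Subsingleton Q) :
    IsSuperfluous (LinearMap.ker π) := by
  obtain ⟨s, t, hs, hst⟩ := exists_split_lift_of_isSuperfluous_ker hc hcs hπ
  have hst' : ∀ x, s (t x) = x := LinearMap.congr_fun hst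
  let r : P →ₗ[R] LinearMap.ker s := (LinearMap.id - t ∘ₗ s).codRestrict _ fun x => by
    simp [hst']
  have : Subsingleton (LinearMap.ker s) := by
    refine h _ r (LinearMap.ext fun q => Subtype.ext ?_) (LinearMap.ext fun q => ?_)
    · simp [r]
    · simp [← hs]
  have hsinj : Function.Injective s :=
    LinearMap.ker_eq_bot.mp Submodule.eq_bot_of_subsingleton
  intro N hN
  have hπN : Function.Surjective (π ∘ₗ N.subtype) := by
    rw [← LinearMap.range_eq_top, LinearMap.range_comp, N.range_subtype,
      LinearMap.map_eq_top_iff (LinearMap.range_eq_top.mpr hπ), hN]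
  rw [← hs, LinearMap.comp_assoc] at hπN
  refine Submodule.eq_top_iff'.mpr fun x => ?_
  obtain ⟨y, hy⟩ := hcs.surjective_of_comp hπN (s x)
  exact hsinj hy ▸ y.2

end Superfluous

section Dual

open Module (Dual)

variable {R}
variable {P P' Q L M : Type*} [AddCommGroup P] [Module R P] [AddCommGroup P'] [Module R P']
  [AddCommGroup Q] [Module R Q] [AddCommGroup L] [Module R L] [AddCommGroup M] [Module R M]

theorem exists_dual_basis (R P : Type*) [CommRing R] [AddCommGroup P] [Module R P]
    [Module.Finite R P] [Module.Projective R P] :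
    ∃ (n : ℕ) (f : Fin n → Dual R P) (p : Fin n → P), ∀ x, ∑ i, f i x • p i = x := by
  obtain ⟨n, a, b, -, -, hab⟩ := Module.Finite.exists_comp_eq_id_of_projective R P
  refine ⟨n, fun i => LinearMap.proj i ∘ₗ b, fun i => a fun j => if i = j then 1 else 0,
    fun x => ?_⟩
  conv_rhs => rw [← LinearMap.id_apply (R := R) x, ← hab, LinearMap.comp_apply,
    LinearMap.pi_apply_eq_sum_univ a (b x)]
  rfl

theorem mem_smul_top_of_forall_apply_mem [Module.Finite R P] [Module.Projective R P] {I : Ideal R}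
    {g : Dual R P} (hg : ∀ x, g x ∈ I) : g ∈ I • (⊤ : Submodule R (Dual R P)) := by
  obtain ⟨n, f, p, hfp⟩ := exists_dual_basis R P
  have hsum : g = ∑ i, g (p i) • f i := LinearMap.ext fun x => by
    conv_lhs => rw [← hfp x]
    simp [mul_comm]
  exact hsum ▸ Submodule.sum_mem _ fun i _ => Submodule.smul_mem_smul (hg _) trivial

theorem IsSuperfluous.range_dualMap [Module.Finite R P'] [Module.Projective R P']
    {d : P' →ₗ[R] P} (hd : IsSuperfluous (LinearMap.range d)) :
    IsSuperfluous (LinearMap.range d.dualMap) := by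
  rw [isSuperfluous_iff_le_jacobson]
  rintro _ ⟨f, rfl⟩
  refine Ring.jacobson_smul_top_le R _ (mem_smul_top_of_forall_apply_mem fun x => ?_)
  exact Module.map_jacobson_le f ⟨d x, hd.le_jacobson ⟨x, rfl⟩, rfl⟩

theorem subsingleton_of_subsingleton_dual [Module.Projective R Q] [Subsingleton (Dual R Q)] :
    Subsingleton Q :=
  (Module.eval_apply_injective R (V := Q)).subsingleton

theorem flip_surjective_of_comp_eq_id [Module.IsReflexive R P] {i : Q →ₗ[R] Dual R P}
    {r : Dual R P →ₗ[R] Q} (hri : r ∘ₗ i = LinearMap.id) : Function.Surjective i.flip := by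
  intro φ
  refine ⟨(Module.evalEquiv R P).symm (φ ∘ₗ r), LinearMap.ext fun q => ?_⟩
  rw [LinearMap.flip_apply, Module.apply_evalEquiv_symm_apply, LinearMap.comp_apply,
    ← LinearMap.comp_apply r, hri, LinearMap.id_apply]

variable [Module.Finite R P] [Module.Projective R P]

theorem subsingleton_of_surjective_of_exact_dualMap [Module.Projective R Q]
    (hM : Function.Injective (Dual.eval R M)) {π : P →ₗ[R] M}
    (hπ : IsSuperfluous (LinearMap.ker π)) {ρ : Dual R P →ₗ[R] L} (hρ : Function.Surjective ρ)
    (hπρ : Function.Exact π.dualMap ρ) {g : L →ₗ[R] Q} (hg : Function.Surjective g) :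
    Subsingleton Q := by
  obtain ⟨t, ht⟩ := Module.projective_lifting_property (g ∘ₗ ρ) LinearMap.id (hg.comp hρ)
  let i : Dual R Q →ₗ[R] P := (Module.evalEquiv R P).symm ∘ₗ (g ∘ₗ ρ).dualMap
  have hi : ∀ (φ : Dual R Q) (f : Dual R P), f (i φ) = φ (g (ρ f)) := fun φ f =>
    Module.apply_evalEquiv_symm_apply ..
  have hti : t.flip ∘ₗ i = LinearMap.id :=
    LinearMap.ext fun φ => LinearMap.ext fun q =>
      (hi φ (t q)).trans (congrArg φ (LinearMap.congr_fun ht q))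
  have hπi : π ∘ₗ i = 0 := LinearMap.ext fun φ => hM <| LinearMap.ext fun h => by
    have hρh : ρ (π.dualMap h) = 0 := hπρ.apply_apply_eq_zero h
    simpa [hρh] using hi φ (π.dualMap h)
  have : Subsingleton (Dual R Q) := hπ.subsingleton_of_split hti hπi
  exact subsingleton_of_subsingleton_dual (R := R)

theorem isSuperfluous_ker_of_exact_dualMap [Module.Projective R P']
    (hM : ∀ (Q : Submodule R (Dual R P)) (g : M →ₗ[R] Dual R Q), Module.Projective R Q →
      Function.Surjective g → Subsingleton (Dual R Q))
    {π : P →ₗ[R] M} (hπ : Function.Surjective π)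
    {ρ : Dual R P →ₗ[R] L} (hρ : Function.Surjective ρ) (hπρ : Function.Exact π.dualMap ρ)
    {c : P' →ₗ[R] L} (hc : Function.Surjective c) (hcs : IsSuperfluous (LinearMap.ker c)) :
    IsSuperfluous (LinearMap.ker ρ) := by
  refine isSuperfluous_ker_of_forall_split_subsingleton hρ hc hcs fun Q r hr hρQ => ?_
  have hQ : Module.Projective R Q := .of_split Q.subtype r hr
  let k : Q →ₗ[R] Dual R M := Q.subtype.codRestrictOfInjective π.dualMap
    (LinearMap.dualMap_injective_of_surjective hπ)
    fun q => (hπρ _).mp (LinearMap.congr_fun hρQ q)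
  have hπk : ∀ q, π.dualMap (k q) = q := fun q => LinearMap.codRestrictOfInjective_comp_apply ..
  have hk : k.flip ∘ₗ π = Q.subtype.flip :=
    LinearMap.ext fun x => LinearMap.ext fun q => LinearMap.congr_fun (hπk q) x
  have hflip : Function.Surjective (k.flip ∘ₗ π) :=
    hk ▸ flip_surjective_of_comp_eq_id (R := R) (P := P) (Q := Q) (i := Q.subtype) (r := r) hr
  have hkflip : Function.Surjective k.flip := .of_comp hflip
  have := hM Q k.flip hQ hkflip
  exact subsingleton_of_subsingleton_dual (R := R)

theorem nonempty_linearEquiv_range_dualMap (hM : Function.Injective (Dual.eval R M))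
    {π : P →ₗ[R] M} (hπ : Function.Surjective π) {e : Q →ₗ[R] Dual R P}
    (he : LinearMap.range e = LinearMap.range π.dualMap) :
    Nonempty (M ≃ₗ[R] LinearMap.range e.dualMap) := by
  have hker : LinearMap.ker π = LinearMap.ker (e.dualMap ∘ₗ Dual.eval R P) := by
    ext x
    calc π x = 0 ↔ ∀ h, π.dualMap h x = 0 :=
          (map_eq_zero_iff _ hM).symm.trans LinearMap.ext_iff
      _ ↔ ∀ f ∈ LinearMap.range e, f x = 0 := by rw [he]; simp
      _ ↔ (e.dualMap ∘ₗ Dual.eval R P) x = 0 := by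
          rw [LinearMap.ext_iff]; simp
  have hrange : LinearMap.range (e.dualMap ∘ₗ Dual.eval R P) = LinearMap.range e.dualMap :=
    LinearMap.range_comp_of_range_eq_top _
      (LinearMap.range_eq_top.mpr (Module.bijective_dual_eval R P).2)
  exact ⟨(π.quotKerEquivOfSurjective hπ).symm ≪≫ₗ Submodule.quotEquivOfEq _ _ hker ≪≫ₗ
    LinearMap.quotKerEquivRange _ ≪≫ₗ LinearEquiv.ofEq _ _ hrange⟩

end Dual

section Linkage

open Module (Dual)

variable {R}

theorem isStable_iff {M : ModuleCat.{u} R} :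
    IsStable R M ↔ ∀ (P : Type u) [AddCommGroup P] [Module R P], Module.Projective R P →
      ∀ g : M →ₗ[R] P, Function.Surjective g → Subsingleton P := by
  constructor
  · intro h P _ _ hP g hg
    obtain ⟨s, hs⟩ := Module.projective_lifting_property g LinearMap.id hg
    exact h (.of R P) (.of R (LinearMap.ker g)) hP
      ⟨(lequivProdOfRightSplitExact (LinearMap.ker g).injective_subtype
        (LinearMap.ker g).range_subtype hs).symm ≪≫ₗ LinearEquiv.prodComm R _ _⟩
  · rintro h P N hP ⟨e⟩
    exact h P hP (LinearMap.fst R P N ∘ₗ e.toLinearMap)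
      ((LinearMap.fst_surjective (R := R)).comp e.surjective)

theorem IsProjectiveCover.isSyzygyOf_iff {P N S : ModuleCat.{u} R} [Module.Finite R P]
    {π : P →ₗ[R] N} (hπ : IsProjectiveCover R π) :
    IsSyzygyOf R N S ↔ Nonempty (S ≃ₗ[R] LinearMap.ker π) := by
  refine ⟨?_, fun h => ⟨P, π, ‹_›, hπ, h⟩⟩
  rintro ⟨P', π', -, ⟨_, hπ', hπs'⟩, ⟨e⟩⟩
  obtain ⟨_, hπ, hπs⟩ := hπ
  exact (nonempty_ker_linearEquiv_ker_of_isSuperfluous hπ' hπs' hπ hπs).map e.trans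

theorem IsProjectiveCover.exists_isMinimalPresentation [IsNoetherianRing R]
    (hsp : IsSemiperfectRing R) {P M : ModuleCat.{u} R} [Module.Finite R P] {π : P →ₗ[R] M}
    (hπ : IsProjectiveCover R π) :
    ∃ (P1 : ModuleCat.{u} R) (d : P1 →ₗ[R] P), IsMinimalPresentation R d π := by
  obtain ⟨P1, c, hP1, hP1proj, hc, hcs⟩ := hsp (.of R (LinearMap.ker π)) inferInstance
  refine ⟨P1, (LinearMap.ker π).subtype ∘ₗ c, hP1, ‹_›, hπ, ?_, hP1proj, ?_⟩
  · rw [LinearMap.range_comp_of_range_eq_top _ (LinearMap.range_eq_top.mpr hc),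
      Submodule.range_subtype]
  · rwa [LinearMap.ker_comp_of_ker_eq_bot _ (LinearMap.ker π).ker_subtype]

namespace IsMinimalPresentation

variable {P1 P0 M : ModuleCat.{u} R} {d : P1 →ₗ[R] P0} {π : P0 →ₗ[R] M}
  (h : IsMinimalPresentation R d π)

include h

theorem surjective : Function.Surjective π := h.2.2.1.2.1

theorem isSuperfluous_ker : IsSuperfluous (LinearMap.ker π) := h.2.2.1.2.2

theorem exact : Function.Exact d π := LinearMap.exact_iff.mpr h.2.2.2.1.symm

theorem exact_dualMap : Function.Exact π.dualMap d.dualMap :=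
  LinearMap.exact_lcomp_of_exact_of_surjective _ h.exact h.surjective

theorem exact_dualMap_of_comp_eq {L : Type*} [AddCommGroup L] [Module R L]
    {ρ : Dual R P0 →ₗ[R] L} {ι : L →ₗ[R] Dual R P1} (hι : Function.Injective ι)
    (hιρ : ι ∘ₗ ρ = d.dualMap) : Function.Exact π.dualMap ρ :=
  hι.comp_exact_iff_exact.mp (hιρ ▸ h.exact_dualMap)

theorem isSyzygyOf_iff {T L : ModuleCat.{u} R}
    (e : T ≃ₗ[R] Dual R P1 ⧸ LinearMap.range d.dualMap) :
    IsSyzygyOf R T L ↔ Nonempty (L ≃ₗ[R] LinearMap.range d.dualMap) := by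
  have := h.1
  have := h.2.2.2.2.1
  let q : Dual R P1 →ₗ[R] T := e.symm.toLinearMap ∘ₗ (LinearMap.range d.dualMap).mkQ
  have hker : LinearMap.ker q = LinearMap.range d.dualMap := by
    rw [LinearEquiv.ker_comp, Submodule.ker_mkQ]
  have hq : IsProjectiveCover R (P := .of R (Dual R P1)) q := by
    refine ⟨Module.dual_projective, e.symm.surjective.comp (Submodule.mkQ_surjective _), ?_⟩
    have hd : IsSuperfluous (LinearMap.range d) := h.2.2.2.1 ▸ h.isSuperfluous_ker
    exact hker ▸ hd.range_dualMap
  have : Module.Finite R (ModuleCat.of R (Dual R P1)) := Module.dual_finite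
  rw [hq.isSyzygyOf_iff, hker]

end IsMinimalPresentation

theorem isLambda_iff {M L : ModuleCat.{u} R} :
    IsLambda R M L ↔ ∃ (P1 P0 : ModuleCat.{u} R) (d : P1 →ₗ[R] P0) (π : P0 →ₗ[R] M),
      IsMinimalPresentation R d π ∧ Nonempty (L ≃ₗ[R] LinearMap.range d.dualMap) := by
  constructor
  · rintro ⟨T, ⟨P1, P0, d, π, h, ⟨e⟩⟩, hL⟩
    exact ⟨P1, P0, d, π, h, (h.isSyzygyOf_iff e).mp hL⟩
  · rintro ⟨P1, P0, d, π, h, hL⟩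
    let T : ModuleCat.{u} R := .of R (Dual R P1 ⧸ LinearMap.range d.dualMap)
    exact ⟨T, ⟨P1, P0, d, π, h, ⟨.refl R T⟩⟩, (h.isSyzygyOf_iff (.refl R T)).mpr hL⟩

theorem exists_isLambda [IsNoetherianRing R] (hsp : IsSemiperfectRing R)
    (M : ModuleCat.{u} R) [Module.Finite R M] : ∃ L, IsLambda R M L := by
  obtain ⟨P0, π, _, hπ⟩ := hsp M ‹_›
  obtain ⟨P1, d, h⟩ := hπ.exists_isMinimalPresentation hsp
  exact ⟨.of R (LinearMap.range d.dualMap),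
    isLambda_iff.mpr ⟨P1, P0, d, π, h, ⟨.refl R _⟩⟩⟩

theorem IsLambda.exists_dual_factorization {M L : ModuleCat.{u} R} (hL : IsLambda R M L) :
    ∃ (P1 P0 : ModuleCat.{u} R) (d : P1 →ₗ[R] P0) (π : P0 →ₗ[R] M)
      (ρ : Dual R P0 →ₗ[R] L) (ι : L →ₗ[R] Dual R P1),
      IsMinimalPresentation R d π ∧ Function.Surjective ρ ∧ Function.Injective ι ∧
        ι ∘ₗ ρ = d.dualMap := by
  obtain ⟨P1, P0, d, π, h, ⟨e⟩⟩ := isLambda_iff.mp hL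
  refine ⟨P1, P0, d, π, e.symm.toLinearMap ∘ₗ d.dualMap.rangeRestrict,
    (LinearMap.range d.dualMap).subtype ∘ₗ e.toLinearMap, h,
    e.symm.surjective.comp d.dualMap.surjective_rangeRestrict,
    (Submodule.injective_subtype _).comp e.injective, ?_⟩
  ext f
  simp

theorem IsLambda.isStable {M L : ModuleCat.{u} R} (hL : IsLambda R M L)
    (hM : Function.Injective (Dual.eval R M)) : IsStable R L := by
  obtain ⟨P1, P0, d, π, ρ, ι, h, hρ, hι, hιρ⟩ := hL.exists_dual_factorization
  have := h.2.1
  have := h.2.2.1.1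
  exact isStable_iff.mpr fun Q _ _ _ g hg =>
    subsingleton_of_surjective_of_exact_dualMap hM h.isSuperfluous_ker hρ
      (h.exact_dualMap_of_comp_eq hι hιρ) hg

theorem IsMinimalPresentation.isProjectiveCover_dual_rangeRestrict [IsNoetherianRing R]
    (hsp : IsSemiperfectRing R) {P1 P0 M : ModuleCat.{u} R} {d : P1 →ₗ[R] P0} {π : P0 →ₗ[R] M}
    (h : IsMinimalPresentation R d π) (hM : IsStable R M) :
    IsProjectiveCover R (P := .of R (Dual R P0)) (M := .of R (LinearMap.range d.dualMap))
      d.dualMap.rangeRestrict := by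
  have := h.2.1
  have := h.2.2.1.1
  have hexact : Function.Exact π.dualMap d.dualMap.rangeRestrict :=
    h.exact_dualMap_of_comp_eq (L := LinearMap.range d.dualMap)
      (ι := (LinearMap.range d.dualMap).subtype) (Submodule.injective_subtype _) rfl
  have hfin : Module.Finite R (LinearMap.range d.dualMap) := inferInstance
  obtain ⟨P, c, -, hP, hc, hcs⟩ := hsp (.of R (LinearMap.range d.dualMap)) hfin
  refine ⟨Module.dual_projective, d.dualMap.surjective_rangeRestrict, ?_⟩
  refine isSuperfluous_ker_of_exact_dualMap (fun Q g hQ hg => ?_) h.surjective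
    d.dualMap.surjective_rangeRestrict hexact hc hcs
  have : Module.Finite R Q := inferInstance
  exact isStable_iff.mp hM _ Module.dual_projective g hg

theorem IsStable.isHorizontallyLinked [IsNoetherianRing R] (hsp : IsSemiperfectRing R)
    {M : ModuleCat.{u} R} [Module.Finite R M] (hM : IsStable R M)
    (hM' : Function.Injective (Dual.eval R M)) : IsHorizontallyLinked R M := by
  obtain ⟨P0, π, hP0, hπ⟩ := hsp M ‹_›
  obtain ⟨P1, d, h⟩ := hπ.exists_isMinimalPresentation hsp
  have := hπ.1
  have : Module.Finite R (ModuleCat.of R (Dual R P0)) := Module.dual_finite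
  obtain ⟨Q, e, he⟩ :=
    (h.isProjectiveCover_dual_rangeRestrict hsp hM).exists_isMinimalPresentation hsp
  have hrange : LinearMap.range e = LinearMap.range π.dualMap := by
    rw [he.2.2.2.1, LinearMap.ker_rangeRestrict, h.exact_dualMap.linearMap_ker_eq]
  exact ⟨.of R (LinearMap.range d.dualMap), .of R (LinearMap.range e.dualMap),
    isLambda_iff.mpr ⟨P1, P0, d, π, h, ⟨.refl R _⟩⟩,
    isLambda_iff.mpr ⟨Q, _, e, _, he, ⟨.refl R _⟩⟩,
    nonempty_linearEquiv_range_dualMap hM' hπ.2.1 hrange⟩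

end Linkage

section Ext

universe w v u'

variable {𝒜 : Type u'} [Category.{v} 𝒜] [Abelian 𝒜] [HasExt.{w} 𝒜] {X Y : 𝒜}

/-- `Ext` from `X` to `Y` vanishes in all positive degrees. The Yoneda-style `Abelian.Ext` is used,
for which Mathlib has the long exact sequences. -/
def ExtVanishes (X Y : 𝒜) : Prop :=
  ∀ n : ℕ, Subsingleton (Abelian.Ext.{w} X Y (n + 1))

namespace ExtVanishes

theorem of_projective [Projective X] : ExtVanishes.{w} X Y :=
  fun n => Abelian.Ext.subsingleton_of_projective X Y n

theorem of_sum_comp_eq_id {ι : Type*} [Fintype ι] {Z : 𝒜} (hZ : ExtVanishes.{w} Z Y)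
    {a : ι → (X ⟶ Z)} {b : ι → (Z ⟶ X)} (hab : ∑ i, a i ≫ b i = 𝟙 X) :
    ExtVanishes.{w} X Y := by
  refine fun n => subsingleton_of_forall_eq 0 fun x => ?_
  have := hZ n
  rw [← Abelian.Ext.mk₀_id_comp x, ← hab, Abelian.Ext.mk₀_sum, Abelian.Ext.sum_comp]
  refine Finset.sum_eq_zero fun i _ => ?_
  rw [← Abelian.Ext.mk₀_comp_mk₀_assoc,
    Subsingleton.elim ((Abelian.Ext.mk₀ (b i)).comp x (zero_add _)) 0, Abelian.Ext.comp_zero]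

theorem of_iso {Z : 𝒜} (hZ : ExtVanishes.{w} Z Y) (e : X ≅ Z) : ExtVanishes.{w} X Y :=
  hZ.of_sum_comp_eq_id (ι := Unit) (a := fun _ => e.hom) (b := fun _ => e.inv) (by simp)

variable {S : ShortComplex 𝒜} (hS : S.ShortExact)

include hS

theorem exists_f_comp_eq (h₃ : ExtVanishes.{w} S.X₃ Y) (ψ : S.X₁ ⟶ Y) :
    ∃ φ : S.X₂ ⟶ Y, S.f ≫ φ = ψ := by
  have := h₃ 0
  obtain ⟨x, hx⟩ := Abelian.Ext.contravariant_sequence_exact₁ hS Y (Abelian.Ext.mk₀ ψ)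
    (add_zero 1) (Subsingleton.elim (α := Abelian.Ext.{w} S.X₃ Y (0 + 1)) _ _)
  obtain ⟨φ, rfl⟩ := (Abelian.Ext.mk₀_bijective _ _).2 x
  rw [Abelian.Ext.mk₀_comp_mk₀] at hx
  exact ⟨φ, (Abelian.Ext.mk₀_bijective _ _).1 hx⟩

theorem of_shortExact_left (h₂ : ExtVanishes.{w} S.X₂ Y) (h₃ : ExtVanishes.{w} S.X₃ Y) :
    ExtVanishes.{w} S.X₁ Y := by
  refine fun n => subsingleton_of_forall_eq 0 fun x => ?_
  have := h₂ n
  have := h₃ (n + 1)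
  obtain ⟨y, rfl⟩ := Abelian.Ext.contravariant_sequence_exact₁ hS Y x (add_comm 1 (n + 1))
    (Subsingleton.elim _ _)
  rw [Subsingleton.elim y 0, Abelian.Ext.comp_zero]

theorem of_shortExact_right (h₁ : ExtVanishes.{w} S.X₁ Y) (h₂ : ExtVanishes.{w} S.X₂ Y)
    (hext : ∀ ψ : S.X₁ ⟶ Y, ∃ φ : S.X₂ ⟶ Y, S.f ≫ φ = ψ) : ExtVanishes.{w} S.X₃ Y := by
  refine fun n => subsingleton_of_forall_eq 0 fun x => ?_
  have := h₂ n
  obtain ⟨y, rfl⟩ := Abelian.Ext.contravariant_sequence_exact₃ hS Y x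
    (Subsingleton.elim _ _) (add_comm 1 n)
  cases n with
  | zero =>
    obtain ⟨ψ, rfl⟩ := (Abelian.Ext.mk₀_bijective _ _).2 y
    obtain ⟨φ, rfl⟩ := hext ψ
    rw [← Abelian.Ext.mk₀_comp_mk₀, hS.extClass_comp_assoc]
  | succ n =>
    have := h₁ n
    rw [Subsingleton.elim y 0, Abelian.Ext.comp_zero]

end ExtVanishes

end Ext

section TotallyReflexive

variable {R}

theorem subsingleton_extM_succ_iff {X Y : ModuleCat.{u} R} {n : ℕ} :
    Subsingleton (ExtM R X Y (n + 1)) ↔ Subsingleton (Abelian.Ext.{u} X Y (n + 1)) := by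
  let P := projectiveResolution X
  have hcocycle : Subsingleton (ExtM R X Y (n + 1)) ↔
      ∀ f : P.complex.X (n + 1) ⟶ Y, P.complex.d (n + 2) (n + 1) ≫ f = 0 →
        ∃ g : P.complex.X n ⟶ Y, P.complex.d (n + 1) n ≫ g = f := by
    rw [← ModuleCat.isZero_iff_subsingleton, ExtM, (P.isoExt (n + 1) Y).isZero_iff,
      ← HomologicalComplex.exactAt_iff_isZero_homology,
      HomologicalComplex.exactAt_iff' _ n (n + 1) (n + 2) (by simp) (by simp),
      ShortComplex.moduleCat_exact_iff]
    rfl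
  rw [hcocycle]
  constructor
  · refine fun h => subsingleton_of_forall_eq 0 fun x => ?_
    obtain ⟨f, hf, rfl⟩ := P.extMk_surjective x (n + 2) rfl
    exact (P.extMk_eq_zero_iff f (n + 2) rfl hf n rfl).mpr (h f hf)
  · intro _ f hf
    exact (P.extMk_eq_zero_iff f (n + 2) rfl hf n rfl).mp (Subsingleton.elim _ _)

theorem extVanishes_iff {X Y : ModuleCat.{u} R} :
    ExtVanishes.{u} X Y ↔ ∀ i : ℕ, 0 < i → Subsingleton (ExtM R X Y i) := by
  refine ⟨fun h i hi => ?_, fun h n => subsingleton_extM_succ_iff.mp (h _ n.succ_pos)⟩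
  obtain ⟨n, rfl⟩ := Nat.exists_eq_succ_of_ne_zero hi.ne'
  exact subsingleton_extM_succ_iff.mpr (h n)

theorem isTotallyCReflexive_iff {C M : ModuleCat.{u} R} :
    IsTotallyCReflexive R C M ↔ Module.Finite R M ∧ Function.Bijective (bidualityMap R C M) ∧
      ExtVanishes.{u} M C ∧ ExtVanishes.{u} (ModuleCat.of R (M →ₗ[R] C)) C := by
  simp only [IsTotallyCReflexive, extVanishes_iff]

theorem gcdim_eq_zero_iff {C M : ModuleCat.{u} R} :
    gcdim R C M = 0 ↔ IsTotallyCReflexive R C M := by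
  rw [gcdim, ENat.sInf_eq_zero]
  simp [gcdimLE]

theorem IsTotallyCReflexive.dual [IsNoetherianRing R] {C M : ModuleCat.{u} R} [Module.Finite R C]
    (hM : IsTotallyCReflexive R C M) : IsTotallyCReflexive R C (.of R (M →ₗ[R] C)) := by
  obtain ⟨hfin, hbij, hExt, hExtDual⟩ := isTotallyCReflexive_iff.mp hM
  let e : M ≃ₗ[R] ((M →ₗ[R] C) →ₗ[R] C) := .ofBijective _ hbij
  have hfinDual : Module.Finite R (M →ₗ[R] C) :=
    have := isNoetherian_linearMap R C M
    inferInstance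
  refine isTotallyCReflexive_iff.mpr ⟨hfinDual, ?_, hExtDual, hExt.of_iso e.symm.toModuleIso⟩
  have hlcomp : Function.Bijective (LinearMap.lcomp R C (bidualityMap R C M)) :=
    (e.congrLeft C R).symm.bijective
  have hcomp : LinearMap.lcomp R C (bidualityMap R C M) ∘ bidualityMap R C (.of R (M →ₗ[R] C)) =
      id := rfl
  exact (hlcomp.of_comp_iff' _).mp (hcomp ▸ Function.bijective_id)

theorem IsTotallyCReflexive.of_exact {C A B X : ModuleCat.{u} R} (hA : IsTotallyCReflexive R C A)
    (hB : IsTotallyCReflexive R C B) {f : A →ₗ[R] B} {g : B →ₗ[R] X} (hf : Function.Injective f)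
    (hfg : Function.Exact f g) (hg : Function.Surjective g)
    (hext : Function.Surjective (LinearMap.lcomp R C f)) : IsTotallyCReflexive R C X := by
  obtain ⟨-, hAbij, hAExt, hAExtDual⟩ := isTotallyCReflexive_iff.mp hA
  obtain ⟨hBfin, hBbij, hBExt, hBExtDual⟩ := isTotallyCReflexive_iff.mp hB
  have hS : (ModuleCat.shortComplexOfCompEqZero f g hfg.linearMap_comp_eq_zero).ShortExact :=
    ModuleCat.shortComplex_shortExact _ hfg hf hg
  have hdual : Function.Exact (LinearMap.lcomp R C g) (LinearMap.lcomp R C f) :=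
    LinearMap.exact_lcomp_of_exact_of_surjective C hfg hg
  have hSdual : (ModuleCat.shortComplexOfCompEqZero (LinearMap.lcomp R C g)
      (LinearMap.lcomp R C f) hdual.linearMap_comp_eq_zero).ShortExact :=
    ModuleCat.shortComplex_shortExact _ hdual (LinearMap.lcomp_injective_of_surjective g hg) hext
  refine isTotallyCReflexive_iff.mpr ⟨.of_surjective g hg, ?_, ?_, ?_⟩
  · refine LinearMap.bijective_of_surjective_of_bijective_of_right_exact f g
      (LinearMap.lcomp R C (LinearMap.lcomp R C f)) (LinearMap.lcomp R C (LinearMap.lcomp R C g))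
      _ _ _ rfl rfl hfg (LinearMap.exact_lcomp_of_exact_of_surjective C hdual hext)
      hAbij.2 hBbij hg fun α => ?_
    obtain ⟨β, hβ⟩ := hAExtDual.exists_f_comp_eq hSdual (ModuleCat.ofHom α)
    exact ⟨β.hom, congrArg ModuleCat.Hom.hom hβ⟩
  · refine hAExt.of_shortExact_right hS hBExt fun ψ => ?_
    obtain ⟨φ, hφ⟩ := hext ψ.hom
    exact ⟨ModuleCat.ofHom φ, ModuleCat.hom_ext hφ⟩
  · exact hBExtDual.of_shortExact_left hSdual hAExtDual

theorem IsSemidualizing.faithfulSMul {C : ModuleCat.{u} R} (hC : IsSemidualizing R C) :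
    FaithfulSMul R C :=
  ⟨fun h => hC.2.1.1 (LinearMap.ext h)⟩

theorem IsSemidualizing.bijective_bidualityMap {C P : ModuleCat.{u} R} (hC : IsSemidualizing R C)
    [Module.Finite R P] [Module.Projective R P] : Function.Bijective (bidualityMap R C P) := by
  have := hC.faithfulSMul
  obtain ⟨n, f, p, hfp⟩ := exists_dual_basis R P
  have hsum : ∀ φ : P →ₗ[R] C, ∑ i, (f i).smulRight (φ (p i)) = φ := fun φ =>
    LinearMap.ext fun x => by
      conv_rhs => rw [← hfp x]
      simp
  refine ⟨(injective_iff_map_eq_zero _).mpr fun x hx => ?_, fun α => ?_⟩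
  · refine (Module.forall_dual_apply_eq_zero_iff R x).mp fun g => ?_
    exact FaithfulSMul.eq_of_smul_eq_smul (α := C) fun c =>
      (LinearMap.congr_fun hx (g.smulRight c)).trans (zero_smul R c).symm
  · choose r hr using fun i => hC.2.1.2 (α ∘ₗ LinearMap.smulRightₗ (f i))
    refine ⟨∑ i, r i • p i, LinearMap.ext fun φ => ?_⟩
    have hα : ∀ i, r i • φ (p i) = α ((f i).smulRight (φ (p i))) := fun i =>
      LinearMap.congr_fun (hr i) _
    conv_rhs => rw [← hsum φ, map_sum]
    simp [bidualityMap, hα]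

theorem IsSemidualizing.isTotallyCReflexive_of_projective {C P : ModuleCat.{u} R}
    (hC : IsSemidualizing R C) [Module.Finite R P] [Module.Projective R P] :
    IsTotallyCReflexive R C P := by
  have : Projective P := (IsProjective.iff_projective P).mp ‹_›
  refine isTotallyCReflexive_iff.mpr
    ⟨‹_›, hC.bijective_bidualityMap, .of_projective, ?_⟩
  obtain ⟨n, f, p, hfp⟩ := exists_dual_basis R P
  refine (extVanishes_iff.mpr hC.2.2).of_sum_comp_eq_id
    (a := fun i => ModuleCat.ofHom (LinearMap.applyₗ (p i)))
    (b := fun i => ModuleCat.ofHom (LinearMap.smulRightₗ (f i))) ?_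
  ext φ x
  conv_rhs => rw [← hfp x]
  simp [ModuleCat.hom_sum]

end TotallyReflexive

section Tensor

open Module (Dual)

variable {R}
variable {C K L M P P' : Type*} [AddCommGroup C] [Module R C] [AddCommGroup K] [Module R K]
  [AddCommGroup L] [Module R L] [AddCommGroup M] [Module R M] [AddCommGroup P] [Module R P]
  [AddCommGroup P'] [Module R P']

theorem subsingleton_of_subsingleton_linearMap [IsNoetherianRing R] [Module.Finite R C]
    [FaithfulSMul R C] [Module.Finite R K] [Subsingleton (C →ₗ[R] K)] : Subsingleton K := by
  obtain ⟨r, hr, hreg⟩ := IsSMulRegular.subsingleton_linearMap_iff.mp ‹Subsingleton (C →ₗ[R] K)›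
  obtain rfl : r = 0 := FaithfulSMul.eq_of_smul_eq_smul (α := C) fun c => by
    rw [Module.mem_annihilator.mp hr c, zero_smul]
  exact hreg.subsingleton

theorem mk_injective_of_projective [FaithfulSMul R C] [Module.Projective R P] :
    Function.Injective (TensorProduct.mk R P C) := by
  refine (injective_iff_map_eq_zero _).mpr fun x hx => ?_
  refine (Module.forall_dual_apply_eq_zero_iff R x).mp fun f => ?_
  refine FaithfulSMul.eq_of_smul_eq_smul (α := C) fun c => ?_
  have hxc : x ⊗ₜ[R] c = 0 := LinearMap.congr_fun hx c
  simpa using congrArg (TensorProduct.lid R C ∘ LinearMap.rTensor C f) hxc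

theorem rTensor_injective_of_surjective_mk [IsNoetherianRing R] [Module.Finite R C]
    [FaithfulSMul R C] [Module.Finite R L] [Module.Projective R P]
    (hL : Function.Surjective (TensorProduct.mk R L C)) {ι : L →ₗ[R] P}
    (hι : Function.Injective ι) : Function.Injective (LinearMap.rTensor C ι) := by
  have : Subsingleton (C →ₗ[R] LinearMap.ker (LinearMap.rTensor C ι)) := by
    refine subsingleton_of_forall_eq 0 fun h => ?_
    obtain ⟨l, hl⟩ := hL ((LinearMap.ker (LinearMap.rTensor C ι)).subtype ∘ₗ h)
    have hlc : ∀ c, l ⊗ₜ[R] c = h c := LinearMap.congr_fun hl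
    have hιl : TensorProduct.mk R P C (ι l) = 0 := LinearMap.ext fun c =>
      (congrArg (LinearMap.rTensor C ι) (hlc c)).trans (h c).2
    obtain rfl : l = 0 :=
      (map_eq_zero_iff _ hι).mp ((map_eq_zero_iff _ mk_injective_of_projective).mp hιl)
    ext c
    rw [← hlc, TensorProduct.zero_tmul, LinearMap.zero_apply, ZeroMemClass.coe_zero]
  have := subsingleton_of_subsingleton_linearMap (R := R) (C := C)
    (K := LinearMap.ker (LinearMap.rTensor C ι))
  exact LinearMap.ker_eq_bot.mp (Submodule.subsingleton_iff_eq_bot.mp this)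

theorem injective_dual_eval_of_surjective_dualTensorHom {C M : ModuleCat.{u} R}
    (hbid : Function.Injective (bidualityMap R C M))
    (hM : Function.Surjective (dualTensorHom R M C)) : Function.Injective (Dual.eval R M) := by
  refine (injective_iff_map_eq_zero _).mpr fun m hm => (map_eq_zero_iff _ hbid).mp ?_
  have hzero : LinearMap.applyₗ m ∘ₗ dualTensorHom R M C = 0 := TensorProduct.ext' fun f c => by
    simp [show f m = 0 from LinearMap.congr_fun hm f]
  exact LinearMap.ext <| hM.forall.mpr <| LinearMap.congr_fun hzero

variable [Module.Finite R P] [Module.Projective R P]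

variable (C) in
/-- The map `Hom(P, C) ≅ P* ⊗ C → L ⊗ C` induced by `ρ : P* → L`, for `P` finite projective. -/
def homToTensor (ρ : Dual R P →ₗ[R] L) : (P →ₗ[R] C) →ₗ[R] L ⊗[R] C :=
  LinearMap.rTensor C ρ ∘ₗ (dualTensorHomEquiv R P C).symm.toLinearMap

theorem homToTensor_comp_dualTensorHom (ρ : Dual R P →ₗ[R] L) :
    homToTensor C ρ ∘ₗ dualTensorHom R P C = LinearMap.rTensor C ρ :=
  LinearMap.ext fun x =>
    congrArg (LinearMap.rTensor C ρ) ((dualTensorHomEquiv R P C).symm_apply_apply x)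

theorem homToTensor_surjective {ρ : Dual R P →ₗ[R] L} (hρ : Function.Surjective ρ) :
    Function.Surjective (homToTensor C ρ) :=
  (LinearMap.rTensor_surjective C hρ).comp (dualTensorHomEquiv R P C).symm.surjective

theorem dualTensorHom_comp_rTensor_comp_homToTensor {d : P' →ₗ[R] P} {ρ : Dual R P →ₗ[R] L}
    {ι : L →ₗ[R] Dual R P'} (hιρ : ι ∘ₗ ρ = d.dualMap) :
    dualTensorHom R P' C ∘ₗ LinearMap.rTensor C ι ∘ₗ homToTensor C ρ = LinearMap.lcomp R C d := by
  rw [← LinearMap.cancel_right (dualTensorHom_bijective (R := R) (M := P) (N := C)).2,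
    LinearMap.comp_assoc, LinearMap.comp_assoc, homToTensor_comp_dualTensorHom,
    ← LinearMap.rTensor_comp, hιρ, dualTensorHom_comp_rTensor_dualMap]

theorem exact_lcomp_homToTensor [Module.Finite R P'] [Module.Projective R P'] {d : P' →ₗ[R] P}
    {π : P →ₗ[R] M} (hdπ : Function.Exact d π) (hπ : Function.Surjective π)
    {ρ : Dual R P →ₗ[R] L} {ι : L →ₗ[R] Dual R P'} (hιρ : ι ∘ₗ ρ = d.dualMap)
    (hι : Function.Injective (LinearMap.rTensor C ι)) :
    Function.Exact (LinearMap.lcomp R C π) (homToTensor C ρ) := by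
  have hinj : Function.Injective (dualTensorHom R P' C ∘ₗ LinearMap.rTensor C ι) :=
    dualTensorHom_bijective.1.comp hι
  rw [← hinj.comp_exact_iff_exact, LinearMap.comp_assoc,
    dualTensorHom_comp_rTensor_comp_homToTensor hιρ]
  exact LinearMap.exact_lcomp_of_exact_of_surjective C hdπ hπ

theorem dualTensorHom_surjective_of_exact {π : P →ₗ[R] M} (hπ : Function.Surjective π)
    {ρ : Dual R P →ₗ[R] L} (hρ : Function.Surjective ρ) (hπρ : Function.Exact π.dualMap ρ)
    (hexact : Function.Exact (LinearMap.lcomp R C π) (homToTensor C ρ)) :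
    Function.Surjective (dualTensorHom R M C) := by
  intro φ
  obtain ⟨x, hx⟩ := dualTensorHom_bijective.2 (LinearMap.lcomp R C π φ)
  have hρx : LinearMap.rTensor C ρ x = 0 := by
    rw [← homToTensor_comp_dualTensorHom, LinearMap.comp_apply, hx, hexact.apply_apply_eq_zero]
  obtain ⟨y, rfl⟩ := (rTensor_exact C hπρ hρ x).mp hρx
  refine ⟨y, LinearMap.lcomp_injective_of_surjective (S := R) π hπ ?_⟩
  rw [← hx, ← LinearMap.comp_apply, ← dualTensorHom_comp_rTensor_dualMap, LinearMap.comp_apply]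

end Tensor

section LambdaTensor

open Module (Dual)

variable {R} [IsNoetherianRing R]

theorem IsLambda.exists_exact_homToTensor {C M L : ModuleCat.{u} R} [Module.Finite R C]
    [FaithfulSMul R C] (hL : IsLambda R M L)
    (hmk : Function.Surjective (TensorProduct.mk R L C)) :
    ∃ (P : ModuleCat.{u} R) (_ : Module.Finite R P) (_ : Module.Projective R P) (π : P →ₗ[R] M)
      (ρ : Dual R P →ₗ[R] L), Function.Surjective π ∧ Function.Surjective ρ ∧
        Function.Exact π.dualMap ρ ∧
        Function.Exact (LinearMap.lcomp R C π) (homToTensor C ρ) := by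
  obtain ⟨P1, P, d, π, ρ, ι, h, hρ, hι, hιρ⟩ := hL.exists_dual_factorization
  have := h.1
  have := h.2.1
  have := h.2.2.1.1
  have := h.2.2.2.2.1
  have : Module.Finite R L := .of_surjective ρ hρ
  exact ⟨P, ‹_›, ‹_›, π, ρ, h.surjective, hρ, h.exact_dualMap_of_comp_eq hι hιρ,
    exact_lcomp_homToTensor h.exact h.surjective hιρ (rTensor_injective_of_surjective_mk hmk hι)⟩

theorem IsLambda.injective_dual_eval {C M L : ModuleCat.{u} R} [Module.Finite R C]
    [FaithfulSMul R C] (hL : IsLambda R M L) (hmk : Function.Surjective (TensorProduct.mk R L C))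
    (hM : Function.Injective (bidualityMap R C M)) : Function.Injective (Dual.eval R M) := by
  obtain ⟨P, _, _, π, ρ, hπ, hρ, hπρ, hexact⟩ := hL.exists_exact_homToTensor hmk
  exact injective_dual_eval_of_surjective_dualTensorHom hM
    (dualTensorHom_surjective_of_exact hπ hρ hπρ hexact)

theorem IsLambda.isTotallyCReflexive_tensor {C M L : ModuleCat.{u} R} (hC : IsSemidualizing R C)
    (hL : IsLambda R M L) (hmk : Function.Surjective (TensorProduct.mk R L C))
    (hM : IsTotallyCReflexive R C M) : IsTotallyCReflexive R C (.of R (L ⊗[R] C)) := by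
  have := hC.1
  have := hC.faithfulSMul
  obtain ⟨P, _, _, π, ρ, hπ, hρ, -, hexact⟩ := hL.exists_exact_homToTensor hmk
  refine hM.dual.of_exact hC.isTotallyCReflexive_of_projective.dual
    (LinearMap.lcomp_injective_of_surjective π hπ) hexact (homToTensor_surjective hρ) ?_
  have hπM : Function.Surjective (bidualityMap R C M ∘ₗ π) := hM.2.1.2.comp hπ
  exact .of_comp (g := bidualityMap R C P) hπM

end LambdaTensor

theorem statement16_general [IsNoetherianRing R] (hsp : IsSemiperfectRing R)
    (C : ModuleCat.{u} R) (hC : IsSemidualizing R C) (M : ModuleCat.{u} R)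
    (hstable : IsStable R M) (hgc : gcdim R C M = 0)
    (hmk : ∀ L : ModuleCat.{u} R, IsLambda R M L → Function.Surjective (TensorProduct.mk R L C)) :
    IsHorizontallyLinked R M ∧
    ∀ L : ModuleCat.{u} R, IsLambda R M L →
      IsStable R L ∧ gcdim R C (ModuleCat.of R (L ⊗[R] C)) = 0 := by
  have hM : IsTotallyCReflexive R C M := gcdim_eq_zero_iff.mp hgc
  have := hC.1
  have := hC.faithfulSMul
  have := hM.1
  obtain ⟨L₀, hL₀⟩ := exists_isLambda hsp M
  have htorsionless : Function.Injective (Module.Dual.eval R M) :=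
    hL₀.injective_dual_eval (hmk L₀ hL₀) hM.2.1.1
  exact ⟨hstable.isHorizontallyLinked hsp htorsionless, fun L hL =>
    ⟨hL.isStable htorsionless,
      gcdim_eq_zero_iff.mpr (hL.isTotallyCReflexive_tensor hC (hmk L hL) hM)⟩⟩

/-- if `M` is stable with `G_C-dim(M) = 0` and `λM ∈ A_C`, then `M` is
horizontally linked, `λM` is stable and `G_C-dim(λM ⊗ C) = 0`. -/
theorem statement16 [IsNoetherianRing R] (hsp : IsSemiperfectRing R)
    (C : ModuleCat.{u} R) (hC : IsSemidualizing R C)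
    (M : ModuleCat.{u} R) (hMfin : Module.Finite R ↥M)
    (hstable : IsStable R M) (hgc : gcdim R C M = 0)
    (hA : ∀ L : ModuleCat.{u} R, IsLambda R M L → MemAuslanderClass R C L) :
    IsHorizontallyLinked R M ∧
    ∀ L : ModuleCat.{u} R, IsLambda R M L →
      IsStable R L ∧ gcdim R C (ModuleCat.of R (↥L ⊗[R] ↥C)) = 0 :=
  statement16_general R hsp C hC M hstable hgc fun L hL => (hA L hL).1.2

end
end

section
/- Let M be a horizontally linked R-module of finite G_C-dimension. Then grade_R(Ext_R^i(M,C)) ≥ i + 1 for every i > 0. -/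
open CategoryTheory TensorProduct

noncomputable section

universe u

variable (R : Type u) [CommRing R]

/-!
Let `E = Ext^i(M, C)` with `i > 0`. Since `R ≅ Hom(C, C)`, vanishing of `Ext^t(E, C)` for all
`t ≤ i` forces vanishing of `Ext^t(E, R)` for all `t ≤ i`, so we argue with `Ext^t(E, C)`. If one
of these is nonzero, then some prime `p ⊇ ann E` has `d := depth C_p ≤ i`. The Auslander–Bridger
inequality `G_C-dim M_p ≤ depth C_p - depth M_p` then gives `E_p = 0`, a contradiction: this is
immediate if `d < i`, and if `d = i > 0` then `depth R_p > 0`, hence `depth M_p > 0`, because `M`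
embeds into a product of copies of `R`.

Localizations are avoided altogether: being zero, injective or surjective at `p` means being so up
to multiplication by a single `s ∉ p`. For the trivial multiplicative set `⊥` in place of the
complement of `p` these are the usual notions.
-/

section ExtComparison

open Abelian CochainComplex HomComplex

variable {R}
variable {X Y : ModuleCat.{u} R}

lemma extMk_zero_injective (P : ProjectiveResolution X) {f : P.complex.X 0 ⟶ Y}
    (hf : P.complex.d 1 0 ≫ f = 0) (h : P.extMk f 1 rfl hf = 0) : f = 0 := by
  rw [← P.extEquivCohomologyClass.apply_eq_iff_eq, P.extEquivCohomologyClass_extMk,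
    P.extEquivCohomologyClass_zero, CohomologyClass.mk_eq_zero_iff,
    Cocycle.toSingleMk_mem_coboundaries_iff _ _ _ _ _ 1 (by simp)] at h
  obtain ⟨g, hg⟩ := h
  have hd : P.cochainComplex.d (-(0 : ℕ)) 1 = 0 :=
    Limits.IsZero.eq_of_tgt (isZero_of_isStrictlyLE _ 0 _ (by simp)) _ _
  rw [hd, Limits.zero_comp] at hg
  rw [← cancel_epi (P.cochainComplexXIso (-(0 : ℕ)) 0 rfl).hom, ← hg, Limits.comp_zero]

lemma smul_extMk (P : ProjectiveResolution X) (r : R) {n : ℕ} (f : P.complex.X n ⟶ Y) (m : ℕ)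
    (hm : n + 1 = m) (hf : P.complex.d m n ≫ f = 0) :
    r • P.extMk f m hm hf = P.extMk (r • f) m hm (by simp [hf]) := by
  rw [Ext.smul_eq_comp_mk₀, P.extMk_comp_mk₀]
  congr 1

/-- The class in `Ext^n(X, Y)` of an `n`-cocycle of `Hom(P, Y)`, for a projective resolution `P`
of `X`. The cocycles are those of the short complex computing the cohomology in degree `n`. -/
def cocycleToExt (P : ProjectiveResolution X) (n : ℕ) :
    LinearMap.ker ((P.complex.linearYonedaObj R Y).sc' (n - 1) n (n + 1)).g.hom →ₗ[R]
      Abelian.Ext X Y n where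
  toFun f := P.extMk (show P.complex.X n ⟶ Y from f.1) (n + 1) rfl f.2
  map_add' _ _ := (P.add_extMk _ _ _ _ _ _).symm
  map_smul' r _ := (smul_extMk P r _ _ _ _).symm

lemma cocycleToExt_surjective (P : ProjectiveResolution X) (n : ℕ) :
    Function.Surjective (cocycleToExt (Y := Y) P n) := fun α ↦
  let ⟨f, hf, h⟩ := P.extMk_surjective α (n + 1) rfl
  ⟨⟨f, hf⟩, h⟩

lemma ker_cocycleToExt (P : ProjectiveResolution X) (n : ℕ) :
    LinearMap.ker (cocycleToExt (Y := Y) P n) = LinearMap.range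
      ((P.complex.linearYonedaObj R Y).sc' (n - 1) n (n + 1)).moduleCatToCycles := by
  ext f
  rw [LinearMap.mem_ker, LinearMap.mem_range]
  cases n with
  | zero =>
    have hd (g) : ((P.complex.linearYonedaObj R Y).sc' (0 - 1) 0 (0 + 1)).moduleCatToCycles g = 0 :=
      Subtype.ext (congr($((P.complex.linearYonedaObj R Y).shape 0 0 (by simp)) g))
    refine ⟨fun h ↦ ⟨0, ?_⟩, ?_⟩
    · rw [map_zero]
      exact Subtype.ext (extMk_zero_injective P f.2 h).symm
    · rintro ⟨g, rfl⟩
      rw [hd, map_zero]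
  | succ n =>
    exact (P.extMk_eq_zero_iff _ _ rfl f.2 n rfl).trans
      ⟨fun ⟨g, hg⟩ ↦ ⟨g, Subtype.ext hg⟩, fun ⟨g, hg⟩ ↦ ⟨g, congrArg Subtype.val hg⟩⟩

lemma nonempty_extM_linearEquiv (X Y : ModuleCat.{u} R) (n : ℕ) :
    Nonempty (ExtM R X Y n ≃ₗ[R] Abelian.Ext X Y n) := by
  let P := projectiveResolution X
  let K := P.complex.linearYonedaObj R Y
  let e : ExtM R X Y n ≅ (K.sc' (n - 1) n (n + 1)).moduleCatLeftHomologyData.H :=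
    P.isoExt n Y ≪≫
    ShortComplex.homologyMapIso (K.isoSc' (n - 1) n (n + 1) (by cases n <;> simp) (by simp)) ≪≫
    ShortComplex.moduleCatHomologyIso _
  exact ⟨e.toLinearEquiv ≪≫ₗ Submodule.quotEquivOfEq _ _ (ker_cocycleToExt P n).symm ≪≫ₗ
    (cocycleToExt P n).quotKerEquivOfSurjective (cocycleToExt_surjective P n)⟩

lemma subsingleton_extM_iff (X Y : ModuleCat.{u} R) (n : ℕ) :
    Subsingleton (ExtM R X Y n) ↔ Subsingleton (Abelian.Ext X Y n) :=
  (nonempty_extM_linearEquiv X Y n).some.toEquiv.subsingleton_congr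

end ExtComparison

section UniformTorsion

variable {R}
variable {S : Submonoid R} {U V W : Type*} [AddCommGroup U] [Module R U] [AddCommGroup V]
  [Module R V] [AddCommGroup W] [Module R W]

/-- `V` is uniformly `S`-torsion: a single element of `S` annihilates it. For finite modules this
says that the localization at `S` vanishes; working with one denominator at a time replaces
localization throughout. -/
def IsUniformlyTorsion (S : Submonoid R) (V : Type*) [AddCommGroup V] [Module R V] : Prop :=
  ∃ s ∈ S, ∀ v : V, s • v = 0

/-- The cokernel of `f` is uniformly `S`-torsion. -/
def IsUniformlySurjective (S : Submonoid R) (f : U →ₗ[R] V) : Prop :=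
  ∃ s ∈ S, ∀ v, ∃ u, f u = s • v

/-- The kernel of `f` is uniformly `S`-torsion. -/
def IsUniformlyInjective (S : Submonoid R) (f : U →ₗ[R] V) : Prop :=
  ∃ s ∈ S, ∀ u, f u = 0 → s • u = 0

lemma isUniformlyTorsion_of_subsingleton [Subsingleton V] : IsUniformlyTorsion S V :=
  ⟨1, S.one_mem, fun _ ↦ Subsingleton.elim _ _⟩

lemma isUniformlyTorsion_bot_iff : IsUniformlyTorsion (⊥ : Submonoid R) V ↔ Subsingleton V := by
  refine ⟨fun ⟨s, hs, h⟩ ↦ ?_, fun _ ↦ isUniformlyTorsion_of_subsingleton⟩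
  obtain rfl := Submonoid.mem_bot.1 hs
  exact subsingleton_of_forall_eq 0 fun v ↦ (one_smul R v).symm.trans (h v)

lemma IsUniformlyInjective.isUniformlyTorsion {f : U →ₗ[R] V} (hf : IsUniformlyInjective S f)
    (hV : IsUniformlyTorsion S V) : IsUniformlyTorsion S U := by
  obtain ⟨s, hs, hf⟩ := hf
  obtain ⟨t, ht, hV⟩ := hV
  exact ⟨s * t, S.mul_mem hs ht, fun u ↦ by rw [mul_smul, hf _ (by rw [map_smul, hV])]⟩

lemma IsUniformlyInjective.of_injective {f : U →ₗ[R] V} (hf : Function.Injective f) :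
    IsUniformlyInjective S f :=
  ⟨1, S.one_mem, fun _ hu ↦ by rw [one_smul, (map_eq_zero_iff f hf).1 hu]⟩

lemma IsUniformlySurjective.exists_comp_eq_smul {f : U →ₗ[R] V} (hf : IsUniformlySurjective S f)
    (hinj : Function.Injective f) : ∃ s ∈ S, ∃ r : V →ₗ[R] U, ∀ v, f (r v) = s • v := by
  obtain ⟨s, hs, hf⟩ := hf
  refine ⟨s, hs, (LinearEquiv.ofInjective f hinj).symm ∘ₗ
    (s • LinearMap.id : V →ₗ[R] V).codRestrict (LinearMap.range f) hf, fun v ↦ ?_⟩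
  exact congrArg Subtype.val ((LinearEquiv.ofInjective f hinj).apply_symm_apply _)

lemma IsUniformlyTorsion.of_injective {f : U →ₗ[R] V} (hf : Function.Injective f)
    (hV : IsUniformlyTorsion S V) : IsUniformlyTorsion S U :=
  (IsUniformlyInjective.of_injective hf).isUniformlyTorsion hV

lemma IsUniformlyTorsion.linearMap (hV : IsUniformlyTorsion S V) :
    IsUniformlyTorsion S (U →ₗ[R] V) :=
  hV.imp fun _ h ↦ ⟨h.1, fun f ↦ LinearMap.ext fun u ↦ h.2 (f u)⟩

lemma IsUniformlyTorsion.of_exact {f : U →ₗ[R] V} {g : V →ₗ[R] W}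
    (hfg : ∀ v, g v = 0 → ∃ u, f u = v) (hU : IsUniformlyTorsion S U)
    (hW : IsUniformlyTorsion S W) : IsUniformlyTorsion S V := by
  obtain ⟨s, hs, hU⟩ := hU
  refine IsUniformlyInjective.isUniformlyTorsion ⟨s, hs, fun v hv ↦ ?_⟩ hW (f := g)
  obtain ⟨u, rfl⟩ := hfg v hv
  rw [← map_smul, hU, map_zero]

end UniformTorsion

section ExtSequences

open Abelian

variable {R}
variable {S : Submonoid R} {T : ShortComplex (ModuleCat.{u} R)}

lemma isUniformlyTorsion_ext_X₂ (hT : T.ShortExact) {Y : ModuleCat.{u} R} {n : ℕ}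
    (h₃ : IsUniformlyTorsion S (Abelian.Ext T.X₃ Y n))
    (h₁ : IsUniformlyTorsion S (Abelian.Ext T.X₁ Y n)) :
    IsUniformlyTorsion S (Abelian.Ext T.X₂ Y n) :=
  .of_exact (f := (Ext.mk₀ T.g).precompOfLinear R Y (zero_add n))
    (g := (Ext.mk₀ T.f).precompOfLinear R Y (zero_add n))
    (fun x hx ↦ Ext.contravariant_sequence_exact₂ hT Y x hx) h₃ h₁

lemma isUniformlyTorsion_ext_X₃ (hT : T.ShortExact) {Y : ModuleCat.{u} R} {n : ℕ}
    (h₁ : IsUniformlyTorsion S (Abelian.Ext T.X₁ Y n))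
    (h₂ : IsUniformlyTorsion S (Abelian.Ext T.X₂ Y (n + 1))) :
    IsUniformlyTorsion S (Abelian.Ext T.X₃ Y (n + 1)) :=
  .of_exact (f := hT.extClass.precompOfLinear R Y (add_comm 1 n))
    (g := (Ext.mk₀ T.g).precompOfLinear R Y (zero_add (n + 1)))
    (fun x hx ↦ Ext.contravariant_sequence_exact₃ hT Y x hx (add_comm 1 n)) h₁ h₂

end ExtSequences

section UniformlyShortExact

open Abelian

variable {R}
variable {S : Submonoid R}

section Retract

variable {U V : ModuleCat.{u} R} {i : U ⟶ V} {r : V ⟶ U} {s : R}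

lemma isUniformlyTorsion_ext_left_of_comp_eq_smul (hs : s ∈ S) (hir : i ≫ r = s • 𝟙 U)
    {Y : ModuleCat.{u} R} {n : ℕ} (h : IsUniformlyTorsion S (Abelian.Ext V Y n)) :
    IsUniformlyTorsion S (Abelian.Ext U Y n) :=
  IsUniformlyInjective.isUniformlyTorsion (f := (Ext.mk₀ r).precompOfLinear R Y (zero_add n))
    ⟨s, hs, fun x hx ↦ by
      have hx : (Ext.mk₀ r).comp x (zero_add n) = 0 := hx
      calc s • x = (Ext.mk₀ (i ≫ r)).comp x (zero_add n) := by simp [hir, Ext.mk₀_smul]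
        _ = 0 := by rw [← Ext.mk₀_comp_mk₀_assoc, hx, Ext.comp_zero]⟩ h

lemma smul_ext_eq_zero_of_comp_eq_smul (hir : i ≫ r = s • 𝟙 U) {Y : ModuleCat.{u} R} {n : ℕ}
    {x : Abelian.Ext Y U n} (hx : x.comp (Ext.mk₀ i) (add_zero n) = 0) : s • x = 0 :=
  calc s • x = x.comp (Ext.mk₀ (i ≫ r)) (add_zero n) := by rw [hir, Ext.smul_eq_comp_mk₀]
    _ = 0 := by rw [← Ext.mk₀_comp_mk₀, ← Ext.comp_assoc_of_third_deg_zero, hx, Ext.zero_comp]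

end Retract

/-- The bound `d ≤ grade(Y, N)` up to `S`-torsion: `Ext^t(Y, N)` is uniformly `S`-torsion for all
`t < d`. -/
def LEUniformGrade (S : Submonoid R) (d : ℕ) (Y N : ModuleCat.{u} R) : Prop :=
  ∀ t < d, IsUniformlyTorsion S (Abelian.Ext Y N t)

lemma LEUniformGrade.of_linearEquiv {d : ℕ} {Y N N' : ModuleCat.{u} R}
    (hN : LEUniformGrade S d Y N') (e : N ≃ₗ[R] N') : LEUniformGrade S d Y N := fun t ht ↦
  .of_injective (f := (Ext.mk₀ e.toModuleIso.hom).postcompOfLinear R Y (add_zero t))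
    ((injective_iff_map_eq_zero _).2 fun x hx ↦ (one_smul R x).symm.trans
      (smul_ext_eq_zero_of_comp_eq_smul (by rw [e.toModuleIso.hom_inv_id, one_smul]) hx))
    (hN t ht)

/-- A complex `0 → X₁ → X₂ → X₃ → 0` that is exact except that its last map is only uniformly
`S`-surjective. Applying `Hom(-, C)` to a short exact sequence gives such a complex when the
obstructing `Ext¹` is uniformly `S`-torsion. -/
structure IsUniformlyShortExact (S : Submonoid R) (T : ShortComplex (ModuleCat.{u} R)) : Prop where
  exact : T.Exact
  mono_f : Mono T.f
  isUniformlySurjective_g : IsUniformlySurjective S T.g.hom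

namespace IsUniformlyShortExact

variable {T : ShortComplex (ModuleCat.{u} R)}

lemma of_shortExact (hT : T.ShortExact) : IsUniformlyShortExact S T where
  exact := hT.exact
  mono_f := hT.mono_f
  isUniformlySurjective_g :=
    ⟨1, S.one_mem, fun v ↦ (hT.moduleCat_surjective_g v).imp fun u hu ↦ by rw [one_smul, hu]⟩

lemma exists_shortExact_range (hT : IsUniformlyShortExact S T) :
    ∃ (B : ModuleCat.{u} R) (q : T.X₂ ⟶ B) (i : B ⟶ T.X₃) (r : T.X₃ ⟶ B) (w : T.f ≫ q = 0),
      (ShortComplex.mk T.f q w).ShortExact ∧ q ≫ i = T.g ∧ ∃ s ∈ S, i ≫ r = s • 𝟙 B := by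
  obtain ⟨hex, hmono, s, hs, hsurj⟩ := hT
  let q := T.g.hom.rangeRestrict
  let r : T.X₃ →ₗ[R] LinearMap.range T.g.hom := (s • LinearMap.id).codRestrict _ hsurj
  have hq (x : T.X₂) : q x = 0 ↔ T.g x = 0 := Subtype.ext_iff
  refine ⟨.of R (LinearMap.range T.g.hom), ModuleCat.ofHom q,
    ModuleCat.ofHom (Submodule.subtype _), ModuleCat.ofHom r, ?_,
    ModuleCat.shortComplex_shortExact _ (fun x ↦ ?_) ((ModuleCat.mono_iff_injective _).1 hmono)
      T.g.hom.surjective_rangeRestrict, rfl, s, hs, rfl⟩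
  · ext x
    exact T.moduleCat_zero_apply x
  · exact (hq x).trans ((ShortComplex.ShortExact.moduleCat_exact_iff_function_exact T).1 hex x)

lemma exists_smul_mem_range_postcomp (hT : IsUniformlyShortExact S T) (Y : ModuleCat.{u} R)
    (n : ℕ) : ∃ s ∈ S, ∀ x : Abelian.Ext Y T.X₂ n, x.comp (Ext.mk₀ T.g) (add_zero n) = 0 →
      ∃ z : Abelian.Ext Y T.X₁ n, z.comp (Ext.mk₀ T.f) (add_zero n) = s • x := by
  obtain ⟨B, q, i, r, w, hB, hqi, s, hs, hir⟩ := hT.exists_shortExact_range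
  refine ⟨s, hs, fun x hx ↦ Ext.covariant_sequence_exact₂ Y hB (s • x) ?_⟩
  rw [Ext.smul_comp]
  refine smul_ext_eq_zero_of_comp_eq_smul hir ?_
  rw [Ext.comp_assoc_of_third_deg_zero, Ext.mk₀_comp_mk₀]
  simpa only [hqi] using hx

lemma isUniformlyInjective_postcomp (hT : IsUniformlyShortExact S T) {Y : ModuleCat.{u} R}
    {n : ℕ} (h : LEUniformGrade S n Y T.X₃) :
    IsUniformlyInjective S ((Ext.mk₀ T.f).postcompOfLinear R Y (add_zero n)) := by
  cases n with
  | zero =>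
    have := hT.mono_f
    exact .of_injective (f := (Ext.mk₀ T.f).postcompOfLinear R Y (add_zero 0))
      (Ext.postcomp_mk₀_injective_of_mono Y T.f)
  | succ n =>
    obtain ⟨B, q, i, r, w, hB, -, s, hs, hir⟩ := hT.exists_shortExact_range
    obtain ⟨t, ht, hY⟩ := h n n.lt_succ_self
    refine ⟨s * t, S.mul_mem hs ht, fun x hx ↦ ?_⟩
    obtain ⟨z, rfl⟩ := Ext.covariant_sequence_exact₁ Y hB x hx rfl
    have hz : s • t • z = 0 := by
      refine smul_ext_eq_zero_of_comp_eq_smul hir ?_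
      rw [Ext.smul_comp, hY]
    rw [← Ext.smul_comp, mul_smul, hz, Ext.zero_comp]

lemma isUniformlyTorsion_ext_X₁ (hT : IsUniformlyShortExact S T) {Y : ModuleCat.{u} R} {n : ℕ}
    (h₂ : IsUniformlyTorsion S (Abelian.Ext T.X₂ Y n))
    (h₃ : IsUniformlyTorsion S (Abelian.Ext T.X₃ Y (n + 1))) :
    IsUniformlyTorsion S (Abelian.Ext T.X₁ Y n) := by
  obtain ⟨B, q, i, r, w, hB, -, s, hs, hir⟩ := hT.exists_shortExact_range
  refine .of_exact (f := (Ext.mk₀ T.f).precompOfLinear R Y (zero_add n))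
    (g := hB.extClass.precompOfLinear R Y (add_comm 1 n))
    (fun x hx ↦ Ext.contravariant_sequence_exact₁ hB Y x (add_comm 1 n) hx) h₂
    (isUniformlyTorsion_ext_left_of_comp_eq_smul hs hir h₃)

lemma isUniformlySurjective_lcomp (hT : IsUniformlyShortExact S T) {C : ModuleCat.{u} R}
    (h : IsUniformlyTorsion S (Abelian.Ext T.X₃ C 1)) :
    IsUniformlySurjective S (T.f.hom.lcomp R C) := by
  obtain ⟨B, q, i, r, w, hB, -, s, hs, hir⟩ := hT.exists_shortExact_range
  obtain ⟨t, ht, hC⟩ := isUniformlyTorsion_ext_left_of_comp_eq_smul hs hir h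
  refine ⟨t, ht, fun φ ↦ ?_⟩
  obtain ⟨x, hx⟩ := Ext.contravariant_sequence_exact₁ hB C (Ext.mk₀ (t • ModuleCat.ofHom φ))
    (add_zero 1) (by rw [Ext.mk₀_smul, Ext.comp_smul, hC])
  obtain ⟨Φ, rfl⟩ := (Ext.mk₀_bijective T.X₂ C).2 x
  rw [Ext.mk₀_comp_mk₀] at hx
  exact ⟨Φ.hom, congrArg ModuleCat.Hom.hom ((Ext.mk₀_bijective _ _).1 hx)⟩

lemma leUniformGrade_X₁ (hT : IsUniformlyShortExact S T) {d e : ℕ} {Y : ModuleCat.{u} R}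
    (h₂ : LEUniformGrade S d Y T.X₂) (h₃ : LEUniformGrade S e Y T.X₃) :
    LEUniformGrade S (min (e + 1) d) Y T.X₁ := fun t ht ↦
  (hT.isUniformlyInjective_postcomp fun m hm ↦ h₃ m (by lia)).isUniformlyTorsion (h₂ t (by lia))

end IsUniformlyShortExact

end UniformlyShortExact

section Dual

open Abelian

variable {R}
variable {S : Submonoid R} (C : ModuleCat.{u} R)

/-- The `C`-dual `W^C = Hom_R(W, C)`. -/
abbrev cDual (W : ModuleCat.{u} R) : ModuleCat.{u} R := .of R (W →ₗ[R] C)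

/-- The map `f^C : X^C → W^C` induced by `f : W → X`. -/
abbrev cDualMap {W X : ModuleCat.{u} R} (f : W ⟶ X) : cDual C X ⟶ cDual C W :=
  ModuleCat.ofHom (f.hom.lcomp R C)

/-- The `C`-dual of a complex `X₁ → X₂ → X₃`. -/
abbrev cDualComplex (T : ShortComplex (ModuleCat.{u} R)) : ShortComplex (ModuleCat.{u} R) :=
  .mk (cDualMap C T.g) (cDualMap C T.f) (by
    ext φ x
    simp [T.moduleCat_zero_apply])

variable {C}

lemma isUniformlyShortExact_cDualComplex {T : ShortComplex (ModuleCat.{u} R)} (hT : T.ShortExact)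
    (h : IsUniformlyTorsion S (Abelian.Ext T.X₃ C 1)) :
    IsUniformlyShortExact S (cDualComplex C T) where
  exact := ModuleCat.shortComplex_exact _ (LinearMap.exact_lcomp_of_exact_of_surjective _
    ((ShortComplex.ShortExact.moduleCat_exact_iff_function_exact T).1 hT.exact)
    hT.moduleCat_surjective_g)
  mono_f := (ModuleCat.mono_iff_injective _).2
    (LinearMap.lcomp_injective_of_surjective _ hT.moduleCat_surjective_g)
  isUniformlySurjective_g := (IsUniformlyShortExact.of_shortExact hT).isUniformlySurjective_lcomp h

lemma bidualityMap_injective_of_injective {W X : ModuleCat.{u} R} {f : W →ₗ[R] X}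
    (hf : Function.Injective f) (hX : Function.Injective (bidualityMap R C X)) :
    Function.Injective (bidualityMap R C W) := fun _ _ h ↦
  hf (hX (LinearMap.ext fun φ ↦ LinearMap.congr_fun h (φ ∘ₗ f)))

variable (C)

lemma bidualityMap_apply (W : ModuleCat.{u} R) (w : W) (φ : W →ₗ[R] C) :
    bidualityMap R C W w φ = φ w :=
  rfl

/-- The composition pairing `Ext^n(Y, X) → Hom(X^C, Ext^n(Y, C))`. -/
def extPairing (Y X : ModuleCat.{u} R) (n : ℕ) :
    Abelian.Ext Y X n →ₗ[R] cDual C X →ₗ[R] Abelian.Ext Y C n :=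
  (Ext.bilinearCompOfLinear R Y X C n 0 n (add_zero n)).compl₂
    (Ext.linearEquiv₀.symm.toLinearMap ∘ₗ ModuleCat.homLinearEquiv.symm.toLinearMap)

/-- The evaluation map `Ext^n(Y, W^C) → Hom(W, Ext^n(Y, C))`. -/
def extEval (Y W : ModuleCat.{u} R) (n : ℕ) :
    Abelian.Ext Y (cDual C W) n →ₗ[R] W →ₗ[R] Abelian.Ext Y C n :=
  (extPairing C Y (cDual C W) n).compl₂ (bidualityMap R C W)

variable {C} {Y W : ModuleCat.{u} R} {n : ℕ}

lemma extPairing_apply {X : ModuleCat.{u} R} (x : Abelian.Ext Y X n) (φ : X →ₗ[R] C) :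
    extPairing C Y X n x φ = x.comp (Ext.mk₀ (ModuleCat.ofHom φ)) (add_zero n) :=
  rfl

lemma extPairing_comp_mk₀ {X Z : ModuleCat.{u} R} (x : Abelian.Ext Y X n) (f : X ⟶ Z)
    (φ : Z →ₗ[R] C) : extPairing C Y Z n (x.comp (Ext.mk₀ f) (add_zero n)) φ =
      extPairing C Y X n x (φ ∘ₗ f.hom) := by
  rw [extPairing_apply, extPairing_apply, Ext.comp_assoc_of_third_deg_zero, Ext.mk₀_comp_mk₀]
  rfl

lemma extEval_apply (x : Abelian.Ext Y (cDual C W) n) (w : W) :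
    extEval C Y W n x w = x.comp (Ext.mk₀ (ModuleCat.ofHom (bidualityMap R C W w))) (add_zero n) :=
  rfl

lemma extEval_comp_cDualMap {X : ModuleCat.{u} R} (f : W ⟶ X)
    (x : Abelian.Ext Y (cDual C X) n) (w : W) :
    extEval C Y W n (x.comp (Ext.mk₀ (cDualMap C f)) (add_zero n)) w = extEval C Y X n x (f w) :=
  extPairing_comp_mk₀ x (cDualMap C f) (bidualityMap R C W w)

section Free

variable {ι : Type*}

/-- The inclusion `C → W^C` of the factor belonging to a vector `b i` of a basis `b` of `W`. -/
abbrev dualBasisHom (b : Module.Basis ι R W) (i : ι) : C ⟶ cDual C W :=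
  ModuleCat.ofHom ((LinearMap.smulRightₗ (b.coord i) : C →ₗ[R] W →ₗ[R] C))

lemma id_cDual_eq_sum [Fintype ι] (b : Module.Basis ι R W) : 𝟙 (cDual C W) =
    ∑ i, ModuleCat.ofHom (bidualityMap R C W (b i)) ≫ dualBasisHom b i := by
  ext φ w
  have : φ w = ∑ i, b.coord i w • φ (b i) := by
    conv_lhs => rw [← b.sum_repr w, map_sum]
    simp only [map_smul, Module.Basis.coord_apply]
  simpa [ModuleCat.hom_sum, LinearMap.sum_apply, bidualityMap_apply] using this

lemma dualBasisHom_comp_eval [DecidableEq ι] (b : Module.Basis ι R W) (i j : ι) :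
    dualBasisHom b i ≫ ModuleCat.ofHom (bidualityMap R C W (b j)) =
      if i = j then 𝟙 C else 0 := by
  ext c
  change b.coord i (b j) • c = _
  rw [Module.Basis.coord_apply, Module.Basis.repr_self, Finsupp.single_apply]
  obtain rfl | hij := eq_or_ne i j
  · simp
  · simp [hij, hij.symm]

lemma extEval_bijective_of_basis [Finite ι] (b : Module.Basis ι R W) :
    Function.Bijective (extEval C Y W n) := by
  classical
  cases nonempty_fintype ι
  refine ⟨(injective_iff_map_eq_zero _).2 fun x hx ↦ ?_, fun φ ↦ ?_⟩
  · have hx (i : ι) : x.comp (Ext.mk₀ (ModuleCat.ofHom (bidualityMap R C W (b i))))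
        (add_zero n) = 0 := LinearMap.congr_fun hx (b i)
    rw [← x.comp_mk₀_id, id_cDual_eq_sum b, Ext.mk₀_sum, Ext.comp_sum]
    refine Finset.sum_eq_zero fun i _ ↦ ?_
    rw [← Ext.mk₀_comp_mk₀, ← Ext.comp_assoc_of_third_deg_zero, hx, Ext.zero_comp]
  · refine ⟨∑ i, (φ (b i)).comp (Ext.mk₀ (dualBasisHom b i)) (add_zero n), b.ext fun j ↦ ?_⟩
    rw [extEval_apply, Ext.sum_comp, Finset.sum_eq_single_of_mem j (Finset.mem_univ j)]
    · rw [Ext.comp_assoc_of_third_deg_zero, Ext.mk₀_comp_mk₀, dualBasisHom_comp_eval, if_pos rfl,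
        Ext.comp_mk₀_id]
    · intro i _ hij
      rw [Ext.comp_assoc_of_third_deg_zero, Ext.mk₀_comp_mk₀, dualBasisHom_comp_eval, if_neg hij,
        Ext.mk₀_zero, Ext.comp_zero]

end Free

end Dual

section Evaluation

open Abelian

variable {R}
variable {S : Submonoid R} {C Y W : ModuleCat.{u} R} {d : ℕ}

/-- `Ext^i(W, C)` is uniformly `S`-torsion for all `i > 0`. -/
def IsUniformlyAcyclic (S : Submonoid R) (C W : ModuleCat.{u} R) : Prop :=
  ∀ i : ℕ, 0 < i → IsUniformlyTorsion S (Abelian.Ext W C i)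

lemma IsUniformlyAcyclic.of_projective [Projective W] : IsUniformlyAcyclic S C W
  | i + 1, _ => ⟨1, S.one_mem, fun x ↦ by rw [one_smul, Ext.eq_zero_of_projective x]⟩

lemma IsUniformlyAcyclic.X₁ {T : ShortComplex (ModuleCat.{u} R)} (hT : T.ShortExact)
    (h₂ : IsUniformlyAcyclic S C T.X₂) (h₃ : IsUniformlyAcyclic S C T.X₃) :
    IsUniformlyAcyclic S C T.X₁ := fun i hi ↦
  (IsUniformlyShortExact.of_shortExact hT).isUniformlyTorsion_ext_X₁ (h₂ i hi) (h₃ _ i.succ_pos)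

variable [IsNoetherianRing R]

lemma exists_cover_extEval_bijective [Module.Finite R W] (hW : IsUniformlyAcyclic S C W) :
    ∃ (F K : ModuleCat.{u} R) (i : K ⟶ F) (π : F ⟶ W) (w : i ≫ π = 0),
      Function.Surjective π ∧ Module.Finite R K ∧ IsUniformlyAcyclic S C K ∧
      IsUniformlyShortExact S (cDualComplex C (.mk i π w)) ∧
      ∀ Y n, Function.Bijective (extEval C Y F n) := by
  obtain ⟨F, _, _, _, _, π, hπ⟩ := Module.exists_finite_presentation R W
  have hT := LinearMap.shortExact_shortComplexKer hπ
  exact ⟨.of R F, _, _, _, _, hπ, Module.IsNoetherian.finite R (LinearMap.ker π),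
    .X₁ hT .of_projective hW, isUniformlyShortExact_cDualComplex hT (hW 1 one_pos),
    fun _ _ ↦ extEval_bijective_of_basis (Module.Free.chooseBasis R F)⟩

lemma LEUniformGrade.cDual [hfin : Module.Finite R W] (hW : IsUniformlyAcyclic S C W)
    (hY : LEUniformGrade S d Y C) : LEUniformGrade S d Y (cDual C W) := by
  intro t ht
  induction t using Nat.strong_induction_on generalizing W with
  | _ t ih =>
    obtain ⟨F, K, i, π, w, -, _, hK, hdual, hF⟩ := exists_cover_extEval_bijective hW
    have hFY : IsUniformlyTorsion S (Abelian.Ext Y (_root_.cDual C F) t) :=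
      .of_injective (hF Y t).1 (hY t ht).linearMap
    exact (hdual.isUniformlyInjective_postcomp
      fun m hm ↦ ih m hm hK (hm.trans ht)).isUniformlyTorsion hFY

lemma isUniformlyInjective_extEval [Module.Finite R W] (hW : IsUniformlyAcyclic S C W)
    (hY : LEUniformGrade S d Y C) : IsUniformlyInjective S (extEval C Y W d) := by
  obtain ⟨F, K, i, π, w, -, _, hK, hdual, hF⟩ := exists_cover_extEval_bijective hW
  obtain ⟨s, hs, hinj⟩ := hdual.isUniformlyInjective_postcomp (hY.cDual hK)
  refine ⟨s, hs, fun x hx ↦ hinj x ((hF Y d).1 (LinearMap.ext fun f ↦ ?_))⟩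
  exact (extEval_comp_cDualMap π x f).trans (by rw [hx, map_zero]; rfl)

lemma isUniformlySurjective_extEval [Module.Finite R W] (hW : IsUniformlyAcyclic S C W)
    (hY : LEUniformGrade S d Y C) : IsUniformlySurjective S (extEval C Y W d) := by
  obtain ⟨F, K, i, π, w, hπ, _, hK, hdual, hF⟩ := exists_cover_extEval_bijective hW
  obtain ⟨s, hs, hinj⟩ := isUniformlyInjective_extEval hK hY
  obtain ⟨t, ht, hlift⟩ := hdual.exists_smul_mem_range_postcomp Y d
  refine ⟨t * s, S.mul_mem ht hs, fun φ ↦ ?_⟩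
  obtain ⟨x, hx⟩ := (hF Y d).2 (φ ∘ₗ π.hom)
  have hres : extEval C Y K d (x.comp (Ext.mk₀ (cDualMap C i)) (add_zero d)) = 0 := by
    ext k
    rw [extEval_comp_cDualMap i x k, hx]
    exact (congrArg φ (LinearMap.congr_fun (congrArg ModuleCat.Hom.hom w) k)).trans (map_zero φ)
  obtain ⟨z, hz⟩ := hlift (s • x) (by rw [Ext.smul_comp, hinj _ hres])
  refine ⟨z, LinearMap.ext fun v ↦ ?_⟩
  obtain ⟨f, rfl⟩ := hπ v
  rw [← extEval_comp_cDualMap π z f, hz, map_smul, map_smul, hx, mul_smul]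
  rfl

end Evaluation

section GCDimension

open Abelian

variable {R}
variable {S : Submonoid R} {C X Y M : ModuleCat.{u} R} {d : ℕ}

lemma gcdim_ne_top_iff : gcdim R C M ≠ ⊤ ↔ ∃ n, gcdimLE R C n M := by
  rw [gcdim, ne_eq, sInf_eq_top]
  simp

@[elab_as_elim]
lemma gcdim_ne_top_induction {motive : ModuleCat.{u} R → Prop}
    (base : ∀ X, IsTotallyCReflexive R C X → motive X)
    (step : ∀ T : ShortComplex (ModuleCat.{u} R), T.ShortExact → IsTotallyCReflexive R C T.X₂ →
      gcdim R C T.X₁ ≠ ⊤ → motive T.X₁ → motive T.X₃)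
    (hM : gcdim R C M ≠ ⊤) : motive M := by
  obtain ⟨n, hn⟩ := gcdim_ne_top_iff.1 hM
  clear hM
  induction n generalizing M with
  | zero => exact base M hn
  | succ n ih =>
    obtain ⟨X, K, f, g, hf, hg, hfg, hX, hK⟩ := hn
    have hex : Function.Exact f g := LinearMap.exact_iff.2 hfg
    exact step (ModuleCat.shortComplexOfCompEqZero f g hex.linearMap_comp_eq_zero)
      (ModuleCat.shortComplex_shortExact _ hex hf hg) hX (gcdim_ne_top_iff.2 ⟨n, hK⟩) (ih hK)

lemma finite_of_gcdim_ne_top (hM : gcdim R C M ≠ ⊤) : Module.Finite R M :=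
  gcdim_ne_top_induction (fun _ hX ↦ hX.1)
    (fun T hT hX _ _ ↦ have := hX.1; .of_surjective T.g.hom hT.moduleCat_surjective_g) hM

namespace IsTotallyCReflexive

lemma isUniformlyAcyclic (hX : IsTotallyCReflexive R C X) : IsUniformlyAcyclic S C X :=
  fun i hi ↦
    have := (subsingleton_extM_iff X C i).1 (hX.2.2.1 i hi)
    isUniformlyTorsion_of_subsingleton

lemma isUniformlyAcyclic_cDual (hX : IsTotallyCReflexive R C X) :
    IsUniformlyAcyclic S C (cDual C X) :=
  fun i hi ↦
    have := (subsingleton_extM_iff (cDual C X) C i).1 (hX.2.2.2 i hi)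
    isUniformlyTorsion_of_subsingleton

variable [IsNoetherianRing R]

lemma leUniformGrade [Module.Finite R C] (hX : IsTotallyCReflexive R C X)
    (hY : LEUniformGrade S d Y C) : LEUniformGrade S d Y X := by
  have := hX.1
  have : Module.Finite R (cDual C X) := inferInstance
  exact (hY.cDual hX.isUniformlyAcyclic_cDual).of_linearEquiv
    (LinearEquiv.ofBijective (bidualityMap R C X) hX.2.1)

end IsTotallyCReflexive

lemma isUniformlyAcyclic_cDual_of_gcdim_ne_top (hM : gcdim R C M ≠ ⊤)
    (hacyc : IsUniformlyAcyclic S C M) : IsUniformlyAcyclic S C (cDual C M) := by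
  revert hacyc
  refine gcdim_ne_top_induction (fun X hX _ ↦ ?_) (fun T hT hX _ ih hacyc ↦ ?_) hM
  · exact hX.isUniformlyAcyclic_cDual
  · have hdual := isUniformlyShortExact_cDualComplex hT (hacyc 1 one_pos)
    exact fun i hi ↦ hdual.isUniformlyTorsion_ext_X₁ (hX.isUniformlyAcyclic_cDual i hi)
      (ih (.X₁ hT hX.isUniformlyAcyclic hacyc) _ i.succ_pos)

lemma isUniformlySurjective_bidualityMap (hM : gcdim R C M ≠ ⊤)
    (hacyc : IsUniformlyAcyclic S C M) : IsUniformlySurjective S (bidualityMap R C M) := by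
  revert hacyc
  refine gcdim_ne_top_induction (fun X hX _ ↦ ?_) (fun T hT hX hK _ hacyc ↦ ?_) hM
  · exact ⟨1, S.one_mem, fun φ ↦ (hX.2.1.2 φ).imp fun x hx ↦ by rw [one_smul, hx]⟩
  · have hK := isUniformlyAcyclic_cDual_of_gcdim_ne_top hK (.X₁ hT hX.isUniformlyAcyclic hacyc)
    obtain ⟨s, hs, hext⟩ := (isUniformlyShortExact_cDualComplex hT
      (hacyc 1 one_pos)).isUniformlySurjective_lcomp (hK 1 one_pos)
    refine ⟨s, hs, fun φ ↦ ?_⟩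
    obtain ⟨Φ, hΦ⟩ := hext φ
    obtain ⟨x, rfl⟩ := hX.2.1.2 Φ
    exact ⟨T.g x, hΦ⟩

end GCDimension

section Pairing

open Abelian

variable {R} [IsNoetherianRing R]
variable {S : Submonoid R} {C X Y : ModuleCat.{u} R} {d : ℕ} [Module.Finite R C]

lemma isUniformlyInjective_extPairing (hX : IsTotallyCReflexive R C X)
    (hY : LEUniformGrade S d Y C) : IsUniformlyInjective S (extPairing C Y X d) := by
  have := hX.1
  have : Module.Finite R (cDual C X) := inferInstance
  obtain ⟨s, hs, hinj⟩ := isUniformlyInjective_extEval hX.isUniformlyAcyclic_cDual hY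
  let δ : X ≅ cDual C (cDual C X) := (LinearEquiv.ofBijective _ hX.2.1).toModuleIso
  refine ⟨s, hs, fun x hx ↦ ?_⟩
  have hδx : extEval C Y (cDual C X) d (x.comp (Ext.mk₀ δ.hom) (add_zero d)) = 0 := by
    ext φ
    rw [extEval_apply, Ext.comp_assoc_of_third_deg_zero, Ext.mk₀_comp_mk₀]
    exact LinearMap.congr_fun hx φ
  rw [← one_smul R (s • x)]
  refine smul_ext_eq_zero_of_comp_eq_smul (by rw [δ.hom_inv_id, one_smul]) ?_
  rw [Ext.smul_comp, hinj _ hδx]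

lemma isUniformlySurjective_extPairing {K : ModuleCat.{u} R} (hK : gcdim R C K ≠ ⊤)
    (hacyc : IsUniformlyAcyclic S C K) (hinj : Function.Injective (bidualityMap R C K))
    (hY : LEUniformGrade S d Y C) : IsUniformlySurjective S (extPairing C Y K d) := by
  have := finite_of_gcdim_ne_top hK
  have : Module.Finite R (cDual C K) := inferInstance
  obtain ⟨s, hs, r, hr⟩ :=
    (isUniformlySurjective_bidualityMap hK hacyc).exists_comp_eq_smul hinj
  obtain ⟨t, ht, hsurj⟩ := isUniformlySurjective_extEval
    (isUniformlyAcyclic_cDual_of_gcdim_ne_top hK hacyc) hY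
  have hr_comp (φ : K →ₗ[R] C) : ModuleCat.ofHom r ≫ ModuleCat.ofHom φ =
      s • ModuleCat.ofHom (bidualityMap R C (cDual C K) φ) := by
    ext Φ
    exact LinearMap.congr_fun (hr Φ) φ
  refine ⟨s * t, S.mul_mem hs ht, fun θ ↦ ?_⟩
  obtain ⟨x, hx⟩ := hsurj θ
  refine ⟨x.comp (Ext.mk₀ (ModuleCat.ofHom r)) (add_zero d), LinearMap.ext fun φ ↦ ?_⟩
  rw [extPairing_apply, Ext.comp_assoc_of_third_deg_zero, Ext.mk₀_comp_mk₀, hr_comp, Ext.mk₀_smul,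
    Ext.comp_smul, ← extEval_apply, hx, mul_smul]
  rfl

/-- Precomposing `ψ` with the connecting map `K^C → Ext¹(N, C)` gives, up to `S`, the pairing with
some `x` in `Ext^d(Y, K)`. The image of `x` in `Ext^d(Y, X)` pairs to zero with `X^C`, so it
vanishes up to `S`, and then so does `x`. -/
lemma linearMap_ext_one_eq_zero {T : ShortComplex (ModuleCat.{u} R)} (hT : T.ShortExact)
    (hX : IsTotallyCReflexive R C T.X₂) (hK : gcdim R C T.X₁ ≠ ⊤)
    (hacyc : IsUniformlyAcyclic S C T.X₁) (hC : LEUniformGrade S d Y C)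
    (hN : LEUniformGrade S d Y T.X₃) (hreg : ∀ s ∈ S, IsSMulRegular (Abelian.Ext Y C d) s)
    (ψ : Abelian.Ext T.X₃ C 1 →ₗ[R] Abelian.Ext Y C d) : ψ = 0 := by
  let connecting : cDual C T.X₁ →ₗ[R] Abelian.Ext T.X₃ C 1 := extPairing C T.X₃ T.X₁ 1 hT.extClass
  obtain ⟨r, hr, hsurj⟩ := isUniformlySurjective_extPairing hK hacyc
    (bidualityMap_injective_of_injective hT.moduleCat_injective_f hX.2.1.1) hC
  obtain ⟨s, hs, hinjX⟩ := isUniformlyInjective_extPairing hX hC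
  obtain ⟨t, ht, hinjK⟩ := (IsUniformlyShortExact.of_shortExact hT).isUniformlyInjective_postcomp hN
  obtain ⟨v, hv, hext⟩ := hX.isUniformlyAcyclic 1 one_pos
  obtain ⟨x, hx⟩ := hsurj (ψ ∘ₗ connecting)
  have hxf : s • x.comp (Ext.mk₀ T.f) (add_zero d) = 0 := by
    refine hinjX _ (LinearMap.ext fun Φ ↦ ?_)
    have hΦ : connecting (Φ ∘ₗ T.f.hom) = 0 := by
      rw [← extPairing_comp_mk₀, hT.extClass_comp, map_zero, LinearMap.zero_apply]
    rw [extPairing_comp_mk₀, hx, LinearMap.smul_apply, LinearMap.comp_apply, hΦ, map_zero,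
      smul_zero, LinearMap.zero_apply]
  have htx : t • s • x = 0 := hinjK (s • x) ((Ext.smul_comp ..).trans hxf)
  ext e
  obtain ⟨φ, hφ⟩ : ∃ φ, connecting φ = v • e := by
    obtain ⟨φ, hφ⟩ := Ext.contravariant_sequence_exact₃ hT C (v • e) (by
      rw [Ext.comp_smul, hext]) (add_zero 1)
    obtain ⟨φ, rfl⟩ := (Ext.mk₀_bijective _ _).2 φ
    exact ⟨φ.hom, hφ⟩
  refine (hreg _ (S.mul_mem (S.mul_mem ht hs) (S.mul_mem hr hv))).right_eq_zero_of_smul ?_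
  calc (t * s * (r * v)) • ψ e = (t • s • r • (ψ ∘ₗ connecting)) φ := by
        simp [hφ, mul_smul]
    _ = 0 := by rw [← hx, ← map_smul, ← map_smul, htx, map_zero, LinearMap.zero_apply]

end Pairing

section AuslanderBridger

open Abelian

variable {R}
variable {p : Ideal R} {C M : ModuleCat.{u} R} {d : ℕ}

lemma annihilator_le_annihilator_ext (Y C : ModuleCat.{u} R) (n : ℕ) :
    Module.annihilator R Y ≤ Module.annihilator R (Abelian.Ext Y C n) := fun r hr ↦ by
  have hr : r • 𝟙 Y = 0 := ModuleCat.hom_ext (LinearMap.ext (Module.mem_annihilator.1 hr))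
  refine Module.mem_annihilator.2 fun x ↦ ?_
  rw [← x.mk₀_id_comp, ← Ext.smul_comp, ← Ext.mk₀_smul, hr, Ext.mk₀_zero, Ext.zero_comp]

/-- The module `C_p` has depth `d`, in a form that involves no localization: the first nonzero
`Ext^d(R ⧸ p, C)` is moreover torsion-free over `R ⧸ p`. -/
structure IsDepthAtPrime (p : Ideal R) [p.IsPrime] (C : ModuleCat.{u} R) (d : ℕ) : Prop where
  subsingleton_ext : ∀ t < d, Subsingleton (Abelian.Ext (.of R (R ⧸ p)) C t)
  nontrivial_ext : Nontrivial (Abelian.Ext (.of R (R ⧸ p)) C d)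
  isSMulRegular : ∀ s ∈ p.primeCompl, IsSMulRegular (Abelian.Ext (.of R (R ⧸ p)) C d) s

lemma IsDepthAtPrime.leUniformGrade [p.IsPrime] (h : IsDepthAtPrime p C d) :
    LEUniformGrade p.primeCompl d (.of R (R ⧸ p)) C := fun t ht ↦
  have := h.subsingleton_ext t ht
  isUniformlyTorsion_of_subsingleton

variable [IsNoetherianRing R]

lemma isUniformlyTorsion_of_forall_linearMap_eq_zero [p.IsPrime] {E H : Type*} [AddCommGroup E]
    [Module R E] [Module.Finite R E] [AddCommGroup H] [Module R H] [Module.Finite R H]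
    [Nontrivial H] (hp : p ≤ Module.annihilator R H) (h : ∀ ψ : E →ₗ[R] H, ψ = 0) :
    IsUniformlyTorsion p.primeCompl E := by
  have : Subsingleton (E →ₗ[R] H) := subsingleton_of_forall_eq 0 h
  obtain ⟨r, hr, hreg⟩ := IsSMulRegular.subsingleton_linearMap_iff.1 this
  refine ⟨r, fun hrp ↦ ?_, Module.mem_annihilator.1 hr⟩
  obtain ⟨v, hv⟩ := exists_ne (0 : H)
  exact hv (hreg.right_eq_zero_of_smul (Module.mem_annihilator.1 (hp hrp) v))

/-- For `e = depth M_p ≤ d = depth C_p` this says that `Ext^t(M, C)_p = 0` for all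
`t > depth C_p - depth M_p`, which is one half of the Auslander–Bridger formula at `p`. -/
theorem isUniformlyTorsion_ext_of_lt_add [p.IsPrime] [Module.Finite R C]
    (hp : IsDepthAtPrime p C d) (hM : gcdim R C M ≠ ⊤) : ∀ e ≤ d,
    LEUniformGrade p.primeCompl e (.of R (R ⧸ p)) M → ∀ t, 0 < t → d < t + e →
      IsUniformlyTorsion p.primeCompl (Abelian.Ext M C t) := by
  refine gcdim_ne_top_induction (fun X hX _ _ _ t ht _ ↦ hX.isUniformlyAcyclic t ht)
    (fun T hT hX hK ih e he hgrade t ht hdt ↦ ?_) hM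
  have hgradeK := (IsUniformlyShortExact.of_shortExact hT).leUniformGrade_X₁
    (hX.leUniformGrade hp.leUniformGrade) hgrade
  obtain _ | _ | t := t
  · contradiction
  · obtain rfl : e = d := by lia
    have hacyc : IsUniformlyAcyclic p.primeCompl C T.X₁ := fun t ht ↦
      ih _ (min_le_right _ _) hgradeK t ht (by lia)
    have := hX.1
    have : Module.Finite R T.X₃ := .of_surjective T.g.hom hT.moduleCat_surjective_g
    have := hp.nontrivial_ext
    refine isUniformlyTorsion_of_forall_linearMap_eq_zero
      (H := Abelian.Ext (.of R (R ⧸ p)) C e) ?_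
      (linearMap_ext_one_eq_zero hT hX hK hacyc hp.leUniformGrade hgrade hp.isSMulRegular)
    exact Ideal.annihilator_quotient.ge.trans (annihilator_le_annihilator_ext (.of R (R ⧸ p)) C e)
  · exact isUniformlyTorsion_ext_X₃ hT (ih _ (min_le_right _ _) hgradeK _ t.succ_pos (by lia))
      (hX.isUniformlyAcyclic _ (Nat.succ_pos _))

end AuslanderBridger

section PrimeSelection

open Abelian

variable {R} [IsNoetherianRing R]
variable {S : Submonoid R} {C : ModuleCat.{u} R} {n : ℕ}

lemma isUniformlyTorsion_ext_of_forall_prime {N : Type u} [AddCommGroup N] [Module R N]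
    [hN : Module.Finite R N] (h : ∀ p : Ideal R, p.IsPrime → Module.annihilator R N ≤ p →
      IsUniformlyTorsion S (Abelian.Ext (.of R (R ⧸ p)) C n)) :
    IsUniformlyTorsion S (Abelian.Ext (.of R N) C n) := by
  induction hN using IsNoetherianRing.induction_on_isQuotientEquivQuotientPrime R with
  | subsingleton N =>
    exact ⟨1, S.one_mem, fun x ↦ by
      rw [← x.mk₀_id_comp, (ModuleCat.isZero_of_subsingleton _).eq_zero_of_src (𝟙 _),
        Ext.mk₀_zero, Ext.zero_comp, smul_zero]⟩
  | quotient N p e =>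
    rw [e.annihilator_eq, Ideal.annihilator_quotient] at h
    exact isUniformlyTorsion_ext_left_of_comp_eq_smul S.one_mem
      (e.toModuleIso.hom_inv_id.trans (one_smul R _).symm) (h p.1 p.2 le_rfl)
  | exact N₁ N₂ N₃ f g hf hg hfg h₁ h₃ =>
    exact isUniformlyTorsion_ext_X₂ (ModuleCat.shortComplex_shortExact
        (ModuleCat.shortComplexOfCompEqZero f g hfg.linearMap_comp_eq_zero) hfg hf hg)
      (h₃ fun p hp hpN ↦ h p hp ((g.annihilator_le_of_surjective hg).trans hpN))
      (h₁ fun p hp hpN ↦ h p hp ((f.annihilator_le_of_injective hf).trans hpN))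

lemma isSMulRegular_ext_quotient_prime {p : Ideal R} [p.IsPrime]
    (h : ∀ q : Ideal R, q.IsPrime → p < q → Subsingleton (Abelian.Ext (.of R (R ⧸ q)) C n))
    {s : R} (hs : s ∉ p) : IsSMulRegular (Abelian.Ext (.of R (R ⧸ p)) C n) s := by
  have hreg : IsSMulRegular (R ⧸ p) s := .of_right_eq_zero_of_smul fun x hx ↦
    (mul_eq_zero.1 ((Algebra.smul_def s x).symm.trans hx)).resolve_left
      (mt Ideal.Quotient.eq_zero_iff_mem.1 hs)
  have hann : p < Module.annihilator R (QuotSMulTop s (R ⧸ p)) :=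
    SetLike.lt_iff_le_and_exists.2 ⟨Ideal.annihilator_quotient.ge.trans
      ((Submodule.mkQ _).annihilator_le_of_surjective (Submodule.mkQ_surjective _)),
      s, QuotSMulTop.mem_annihilator _ s, hs⟩
  have hsub : Subsingleton (Abelian.Ext (.of R (QuotSMulTop s (R ⧸ p))) C n) :=
    isUniformlyTorsion_bot_iff.1 (isUniformlyTorsion_ext_of_forall_prime fun q hq hle ↦
      isUniformlyTorsion_bot_iff.2 (h q hq (hann.trans_le hle)))
  refine .of_right_eq_zero_of_smul fun x hx ↦ ?_
  have hsx : (Ext.mk₀ (s • 𝟙 (ModuleCat.of R (R ⧸ p)))).comp x (zero_add n) = 0 := by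
    rw [Ext.mk₀_smul, Ext.smul_comp, Ext.mk₀_id_comp, hx]
  obtain ⟨y, rfl⟩ := Ext.contravariant_sequence_exact₂
    (IsSMulRegular.smulShortComplex_shortExact (M := .of R (R ⧸ p)) hreg) C x hsx
  have hy : y = 0 := hsub.elim y 0
  exact hy ▸ Ext.comp_zero _ _ _ _ _

/-- Take `p` maximal among the primes containing the annihilator of `Y` for which some
`Ext^t(R ⧸ p, C)` with `t ≤ n` is nonzero. -/
lemma exists_isDepthAtPrime {Y : ModuleCat.{u} R} [Module.Finite R Y]
    (hY : Nontrivial (Abelian.Ext Y C n)) : ∃ (p : Ideal R) (_ : p.IsPrime), ∃ d ≤ n,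
      Module.annihilator R Y ≤ p ∧ IsDepthAtPrime p C d := by
  classical
  let P (p : Ideal R) : Prop := p.IsPrime ∧ Module.annihilator R Y ≤ p ∧
    ∃ t ≤ n, Nontrivial (Abelian.Ext (.of R (R ⧸ p)) C t)
  have hP : ∃ p, P p := by
    by_contra! hP
    refine not_subsingleton_iff_nontrivial.2 hY (isUniformlyTorsion_bot_iff.1
      (isUniformlyTorsion_ext_of_forall_prime fun p hp hle ↦ isUniformlyTorsion_bot_iff.2 ?_))
    exact not_nontrivial_iff_subsingleton.1 fun hnt ↦ hP p ⟨hp, hle, n, le_rfl, hnt⟩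
  obtain ⟨p, ⟨hp, hle, hex⟩, hmax⟩ := exists_maximal_of_wellFoundedGT P hP
  obtain ⟨hd, hnt⟩ := Nat.find_spec hex
  refine ⟨p, hp, Nat.find hex, hd, hle, fun t ht ↦ ?_, hnt, fun s hs ↦ ?_⟩
  · exact not_nontrivial_iff_subsingleton.1 fun h ↦ Nat.find_min hex ht ⟨ht.le.trans hd, h⟩
  · exact isSMulRegular_ext_quotient_prime (fun q hq hpq ↦ not_nontrivial_iff_subsingleton.1
      fun h ↦ hpq.not_ge (hmax ⟨hq, hle.trans hpq.le, _, hd, h⟩ hpq.le)) hs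

end PrimeSelection

section Grade

open Abelian

variable {R}

lemma LEUniformGrade.of_isSemidualizing [IsNoetherianRing R] {S : Submonoid R}
    {C Y : ModuleCat.{u} R} {d : ℕ} (hC : IsSemidualizing R C) (hY : LEUniformGrade S d Y C) :
    LEUniformGrade S d Y (.of R R) := by
  obtain ⟨_, hhom, hext⟩ := hC
  have hacyc : IsUniformlyAcyclic S C C := fun i hi ↦
    have := (subsingleton_extM_iff C C i).1 (hext i hi)
    isUniformlyTorsion_of_subsingleton
  exact (hY.cDual hacyc).of_linearEquiv
    (.ofBijective (LinearMap.toSpanSingleton R (C →ₗ[R] C) LinearMap.id) hhom)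

lemma isUniformlyTorsion_ext_zero_of_dual_eval_injective {S : Submonoid R} {Y M : ModuleCat.{u} R}
    (hM : Function.Injective (Module.Dual.eval R M))
    (hY : IsUniformlyTorsion S (Abelian.Ext Y (.of R R) 0)) :
    IsUniformlyTorsion S (Abelian.Ext Y M 0) := by
  obtain ⟨s, hs, hs0⟩ := hY
  refine ⟨s, hs, fun x ↦ ?_⟩
  obtain ⟨g, rfl⟩ := (Ext.mk₀_bijective Y M).2 x
  rw [← Ext.mk₀_smul]
  have hg : s • g = 0 := by
    ext y
    refine hM (LinearMap.ext fun f ↦ ?_)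
    have hsf := hs0 (Ext.mk₀ (g ≫ ModuleCat.ofHom f))
    rw [← Ext.mk₀_smul] at hsf
    simpa using congr($((Ext.mk₀_bijective Y (.of R R)).1 (hsf.trans (Ext.mk₀_zero _ _).symm)) y)
  rw [hg, Ext.mk₀_zero]

lemma IsHorizontallyLinked.dual_eval_injective {M : ModuleCat.{u} R}
    (hM : IsHorizontallyLinked R M) : Function.Injective (Module.Dual.eval R M) := by
  obtain ⟨_, _, -, ⟨_, -, P, π, -, ⟨_, -, -⟩, ⟨e⟩⟩, ⟨e'⟩⟩ := hM
  let j : M →ₗ[R] P := (LinearMap.ker π).subtype ∘ₗ (e' ≪≫ₗ e).toLinearMap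
  have hj : Function.Injective j := Subtype.val_injective.comp (e' ≪≫ₗ e).injective
  refine (injective_iff_map_eq_zero _).2 fun m hm ↦ hj ?_
  rw [map_zero]
  exact (Module.forall_dual_apply_eq_zero_iff R (j m)).1 fun f ↦ LinearMap.congr_fun hm (f ∘ₗ j)

lemma le_gradeR_of_isSemidualizing [IsNoetherianRing R] {C Y : ModuleCat.{u} R} {n : ℕ}
    (hC : IsSemidualizing R C) (hY : LEUniformGrade ⊥ n Y C) : (n : ℕ∞) ≤ gradeR R Y := by
  refine le_sInf ?_
  rintro _ ⟨t, ht, rfl⟩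
  refine Nat.cast_le.2 (not_lt.1 fun htn ↦ ht ?_)
  exact (subsingleton_extM_iff _ _ _).2
    (isUniformlyTorsion_bot_iff.1 (hY.of_isSemidualizing hC t htn))

lemma isUniformlyTorsion_ext_of_dual_eval_injective [IsNoetherianRing R] {C M : ModuleCat.{u} R}
    {p : Ideal R} [p.IsPrime] {d i : ℕ} (hC : IsSemidualizing R C)
    (hM : Function.Injective (Module.Dual.eval R M)) (hfin : gcdim R C M ≠ ⊤)
    (hp : IsDepthAtPrime p C d) (hdi : d ≤ i) (hi : 0 < i) :
    IsUniformlyTorsion p.primeCompl (Abelian.Ext M C i) := by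
  have := hC.1
  obtain rfl | hd := d.eq_zero_or_pos
  · exact isUniformlyTorsion_ext_of_lt_add hp hfin 0 le_rfl
      (fun t ht ↦ absurd ht t.not_lt_zero) i hi hi
  · refine isUniformlyTorsion_ext_of_lt_add hp hfin 1 hd (fun t ht ↦ ?_) i hi (by lia)
    obtain rfl : t = 0 := by lia
    exact isUniformlyTorsion_ext_zero_of_dual_eval_injective hM
      (hp.leUniformGrade.of_isSemidualizing hC 0 hd)

end Grade

theorem statement17_general [IsNoetherianRing R] (C : ModuleCat.{u} R) (hC : IsSemidualizing R C)
    (M : ModuleCat.{u} R) (hM : Function.Injective (Module.Dual.eval R M))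
    (hfin : gcdim R C M ≠ ⊤) (i : ℕ) (hi : 0 < i) :
    (i : ℕ∞) + 1 ≤ gradeR R (ExtM R M C i) := by
  have := hC.1
  have := finite_of_gcdim_ne_top hfin
  obtain ⟨e⟩ := nonempty_extM_linearEquiv M C i
  have : Module.Finite R (ExtM R M C i) := .equiv e.symm
  refine le_gradeR_of_isSemidualizing (n := i + 1) hC fun t ht ↦ isUniformlyTorsion_bot_iff.2 ?_
  by_contra hne
  obtain ⟨p, _, d, hdt, hle, hp⟩ := exists_isDepthAtPrime (not_subsingleton_iff_nontrivial.1 hne)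
  obtain ⟨s, hs, hs0⟩ :=
    isUniformlyTorsion_ext_of_dual_eval_injective hC hM hfin hp (by lia : d ≤ i) hi
  exact hs (hle (e.annihilator_eq.ge (Module.mem_annihilator.2 hs0)))

/-- if `M` is horizontally linked of finite `G_C`-dimension, then
`grade_R(Ext_R^i(M,C)) ≥ i + 1` for every `i > 0`. -/
theorem statement17 [IsNoetherianRing R] (hsp : IsSemiperfectRing R)
    (C : ModuleCat.{u} R) (hC : IsSemidualizing R C)
    (M : ModuleCat.{u} R) (hMfin : Module.Finite R ↥M)
    (hlink : IsHorizontallyLinked R M) (hfin : gcdim R C M ≠ ⊤) :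
    ∀ i : ℕ, 0 < i → (i : ℕ∞) + 1 ≤ gradeR R (ExtM R M C i) :=
  statement17_general R C hC M hlink.dual_eval_injective hfin

end
end
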